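/- arXiv:2302.09535 — 2 statements merged into one kernel-verified Lean document; each statement's English description precedes it below -/
import Mathlib

section
/- Let k be a field of characteristic 2 and consider the ring R = k[[x,y,z]]/(z² + zx²y² + x⁵ + y⁵) (the singularity EDP_{4,4}^{(1)}). Then R is a normal domain and the origin is a double point: the multiplicity of the maximal ideal of R is 2. -/
open MvPowerSeries

/-!
By Weierstrass preparation `R` is the free quadratic algebra `A[z]`, `z² + p z + q = 0`, over the
factorial ring `A = k⟦x, y⟧`, where `p = x²y²` and `q = x⁵ + y⁵`. An element `r + s z` divided by a
prime `π` of `A` can be integral only if `π` divides its trace and `π²` its norm. In characteristic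
two the trace is `p s`, so either `π ∣ s`, and then `π ∣ r`, or `π` is `x` or `y`. Modulo `x` the
norm is `r² + s² y⁵`, which vanishes only for `r = s = 0` because `y⁵` has odd order; the same
argument excludes a root of the quadratic equation in `A`, so that `R` is a domain. The multiplicity
is two because the equation is `z²` modulo `(x, y, z)³`.
-/

namespace EllipticDoublePoint

section IntegralClosure

variable {A : Type*} [CommRing A]

theorem dvd_of_isIntegral_of_algebraMap_mul_eq [IsDomain A] [IsIntegrallyClosed A]
    {L : Type*} [Field L] [Algebra A L] [FaithfulSMul A L] {n m : A} {v : L} (hn : n ≠ 0)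
    (hv : IsIntegral A v) (h : algebraMap A L n * v = algebraMap A L m) : n ∣ m := by
  let K := FractionRing A
  let := FractionRing.liftAlgebra A L
  have : IsScalarTower A K L := FractionRing.isScalarTower_liftAlgebra A L
  have hnL : algebraMap A L n ≠ 0 := by simpa using hn
  have hv_eq : v = algebraMap K L (algebraMap A K m / algebraMap A K n) := by
    rw [map_div₀, ← IsScalarTower.algebraMap_apply, ← IsScalarTower.algebraMap_apply,
      eq_div_iff hnL, mul_comm, h]
  rw [hv_eq, isIntegral_algebraMap_iff (algebraMap K L).injective] at hv
  obtain ⟨w, hw⟩ := IsIntegrallyClosed.algebraMap_eq_of_integral hv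
  refine ⟨w, FaithfulSMul.algebraMap_injective A L ?_⟩
  rw [map_mul, ← h, hv_eq, ← hw, ← IsScalarTower.algebraMap_apply]

-- Clear a denominator `n ∈ A` of an integral fraction one prime factor at a time.
theorem isIntegrallyClosed_of_forall_prime_dvd [UniqueFactorizationMonoid A] {S : Type*}
    [CommRing S] [IsDomain S] [Algebra A S] [FaithfulSMul A S] [Algebra.IsAlgebraic A S]
    (h : ∀ (π : A) (s : S) (u : FractionRing S), Prime π → IsIntegral S u →
      algebraMap A (FractionRing S) π * u = algebraMap S (FractionRing S) s →
      algebraMap A S π ∣ s) : IsIntegrallyClosed S := by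
  let L := FractionRing S
  have descend (n : A) : n ≠ 0 → ∀ u : L, IsIntegral S u →
      (∃ s, algebraMap S L s = algebraMap A L n * u) → ∃ s, algebraMap S L s = u := by
    induction n using UniqueFactorizationMonoid.induction_on_prime with
    | h₁ => exact fun h0 ↦ absurd rfl h0
    | h₂ n hn =>
      rintro - u - ⟨s, hs⟩
      obtain ⟨m, hm⟩ := hn.exists_left_inv
      refine ⟨algebraMap A S m * s, ?_⟩
      rw [map_mul, hs, ← IsScalarTower.algebraMap_apply, ← mul_assoc, ← map_mul, hm, map_one,
        one_mul]
    | h₃ n π hn hπ ih =>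
      rintro - u hu ⟨s, hs⟩
      have hnu : IsIntegral S (algebraMap A L n * u) := by
        rw [IsScalarTower.algebraMap_apply A S L]
        exact isIntegral_algebraMap.mul hu
      obtain ⟨t, rfl⟩ := h π s (algebraMap A L n * u) hπ hnu (by rw [hs, map_mul, mul_assoc])
      refine ih hn u hu ⟨t, ?_⟩
      have hπL : algebraMap A L π ≠ 0 := by simpa using hπ.ne_zero
      apply mul_left_cancel₀ hπL
      rw [← mul_assoc, ← map_mul, ← hs, map_mul, ← IsScalarTower.algebraMap_apply]
  rw [isIntegrallyClosed_iff L]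
  intro u hu
  obtain ⟨s, d, hd, rfl⟩ := IsFractionRing.div_surjective (A := S) u
  obtain ⟨n, hn, c, hc⟩ := (Algebra.IsAlgebraic.isAlgebraic (R := A) d).exists_nonzero_dvd hd
  have hdL : algebraMap S L d ≠ 0 := by simpa using nonZeroDivisors.ne_zero hd
  refine descend n hn _ hu ⟨c * s, ?_⟩
  rw [IsScalarTower.algebraMap_apply A S L, hc, map_mul, map_mul, mul_right_comm,
    mul_div_cancel₀ _ hdL, mul_comm]

end IntegralClosure

section Quadratic

open QuadraticAlgebra

variable {A : Type*} [CommRing A] {a b : A}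

theorem exists_algHom_fractionRing_star [IsDomain (QuadraticAlgebra A a b)] :
    ∃ σ : FractionRing (QuadraticAlgebra A a b) →ₐ[A] FractionRing (QuadraticAlgebra A a b),
      ∀ z : QuadraticAlgebra A a b, σ (algebraMap _ _ z) = algebraMap _ _ (star z) := by
  let L := FractionRing (QuadraticAlgebra A a b)
  let conj : QuadraticAlgebra A a b →ₐ[A] L :=
    (IsScalarTower.toAlgHom A _ L).comp
      { starRingEnd (QuadraticAlgebra A a b) with
        commutes' r := by ext <;> simp [starRingEnd_apply] }
  have hconj : Function.Injective conj :=
    (IsFractionRing.injective _ L).comp star_injective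
  exact ⟨IsFractionRing.liftAlgHom hconj, fun z ↦ IsFractionRing.lift_algebraMap hconj z⟩

variable [IsDomain A]

theorem im_dvd_re_of_norm_eq_zero [IsIntegrallyClosed A] {z : QuadraticAlgebra A a b}
    (hz : z.norm = 0) : z.im ∣ z.re := by
  rcases eq_or_ne z.im 0 with him | him
  · have hre : z.re = 0 := by simpa [norm_def, him] using hz
    simp [hre]
  let K := FractionRing A
  have himK : algebraMap A K z.im ≠ 0 := by simpa using him
  obtain ⟨v, hv_mul⟩ : ∃ v : K, algebraMap A K z.im * v = algebraMap A K (-z.re) :=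
    ⟨_, mul_div_cancel₀ _ himK⟩
  have hv : v ^ 2 - algebraMap A K b * v - algebraMap A K a = 0 := by
    have hzK := congrArg (algebraMap A K) hz
    simp only [norm_def, map_add, map_sub, map_mul, map_zero] at hzK
    rw [map_neg] at hv_mul
    apply mul_left_cancel₀ (pow_ne_zero 2 himK)
    linear_combination hzK + (algebraMap A K z.im * v - algebraMap A K z.re
      - algebraMap A K b * algebraMap A K z.im) * hv_mul
  have hv_int : IsIntegral A v := by
    refine ⟨.X ^ 2 - .C b * .X - .C a, by monicity!, ?_⟩
    simpa using hv
  exact dvd_neg.1 (dvd_of_isIntegral_of_algebraMap_mul_eq him hv_int hv_mul)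

theorem isDomain_quadraticAlgebra [IsIntegrallyClosed A] (h : ∀ r : A, r ^ 2 ≠ a + b * r) :
    IsDomain (QuadraticAlgebra A a b) := by
  have eq_zero_of_norm_eq_zero (z : QuadraticAlgebra A a b) (hz : z.norm = 0) : z = 0 := by
    obtain ⟨r, hr⟩ := im_dvd_re_of_norm_eq_zero hz
    have hfactor : z.im ^ 2 * ((-r) ^ 2 - (a + b * -r)) = 0 := by
      rw [norm_def, hr] at hz
      linear_combination hz
    have him : z.im = 0 := pow_eq_zero_iff two_ne_zero |>.1
      ((mul_eq_zero.1 hfactor).resolve_right (sub_ne_zero.2 (h (-r))))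
    ext
    · simp [hr, him]
    · exact him
  have : NoZeroDivisors (QuadraticAlgebra A a b) := ⟨fun {z w} hzw ↦ by
    have hnorm : z.norm * w.norm = 0 := by rw [← map_mul, hzw, QuadraticAlgebra.norm_zero]
    exact (mul_eq_zero.1 hnorm).imp (eq_zero_of_norm_eq_zero z) (eq_zero_of_norm_eq_zero w)⟩
  exact NoZeroDivisors.to_isDomain _

variable [IsDomain (QuadraticAlgebra A a b)]

theorem dvd_trace_and_sq_dvd_norm_of_isIntegral [IsIntegrallyClosed A] {n : A} (hn : n ≠ 0)
    {z : QuadraticAlgebra A a b} {u : FractionRing (QuadraticAlgebra A a b)}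
    (hu : IsIntegral A u) (h : algebraMap A _ n * u = algebraMap _ _ z) :
    n ∣ z.trace ∧ n ^ 2 ∣ z.norm := by
  let B := QuadraticAlgebra A a b
  let L := FractionRing B
  obtain ⟨σ, hσ⟩ := exists_algHom_fractionRing_star (a := a) (b := b)
  have hσu : IsIntegral A (σ u) := hu.map σ
  have hστ : algebraMap A L n * σ u = algebraMap B L (star z) := by
    rw [← hσ, ← h, map_mul, σ.commutes]
  constructor
  · refine dvd_of_isIntegral_of_algebraMap_mul_eq hn (hu.add hσu) ?_
    rw [mul_add, h, hστ, ← map_add, ← algebraMap_trace_eq_add_star,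
      ← IsScalarTower.algebraMap_apply]
  · refine dvd_of_isIntegral_of_algebraMap_mul_eq (pow_ne_zero 2 hn) (hu.mul hσu) ?_
    rw [map_pow, sq, mul_mul_mul_comm, h, hστ, ← map_mul, ← algebraMap_norm_eq_mul_star,
      ← IsScalarTower.algebraMap_apply]

theorem isIntegrallyClosed_quadraticAlgebra [UniqueFactorizationMonoid A]
    (h : ∀ (π : A) (z : QuadraticAlgebra A a b), Prime π → π ∣ z.trace → π ^ 2 ∣ z.norm →
      algebraMap A _ π ∣ z) : IsIntegrallyClosed (QuadraticAlgebra A a b) := by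
  refine isIntegrallyClosed_of_forall_prime_dvd (A := A) fun π z u hπ hu hπu ↦ ?_
  obtain ⟨htr, hnm⟩ :=
    dvd_trace_and_sq_dvd_norm_of_isIntegral hπ.ne_zero (isIntegral_trans u hu) hπu
  exact h π z hπ htr hnm

theorem isIntegrallyClosed_quadraticAlgebra_of_charTwo [UniqueFactorizationMonoid A] [CharP A 2]
    (h : ∀ π r s : A, Prime π → π ∣ b → π ∣ r ^ 2 - a * s ^ 2 → π ∣ r ∧ π ∣ s) :
    IsIntegrallyClosed (QuadraticAlgebra A a b) := by
  refine isIntegrallyClosed_quadraticAlgebra fun π z hπ htr hnm ↦ algebraMap_dvd_iff.2 ?_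
  rw [trace_def, CharTwo.two_eq_zero, zero_mul, zero_add] at htr
  have hnm' : π ∣ z.re * z.re + b * z.re * z.im - a * z.im * z.im :=
    (dvd_pow_self π two_ne_zero).trans hnm
  rcases hπ.dvd_or_dvd htr with hb | him
  · refine h π z.re z.im hπ hb ?_
    convert hnm'.sub (hb.mul_right (z.re * z.im)) using 1
    ring
  · refine ⟨hπ.dvd_of_dvd_pow (n := 2) ?_, him⟩
    convert hnm'.sub (him.mul_right (b * z.re - a * z.im)) using 1
    ring

end Quadratic

section Weierstrass

open scoped Polynomial

variable {A : Type*} [CommRing A]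

/-- `A[ω]` with `ω² = a + b ω`, presented by adjoining a root of its defining polynomial. -/
noncomputable def adjoinRootEquivQuadraticAlgebra (a b : A) :
    AdjoinRoot (.X ^ 2 - .C b * .X - .C a : A[X]) ≃ₐ[A] QuadraticAlgebra A a b :=
  AlgEquiv.ofAlgHom
    (AdjoinRoot.liftAlgHom _ (Algebra.ofId A _) QuadraticAlgebra.omega (by
      simp [sq, QuadraticAlgebra.omega_mul_omega_eq_algebraMap]))
    (QuadraticAlgebra.lift ⟨AdjoinRoot.root _, by
      have h := AdjoinRoot.eval₂_root (.X ^ 2 - .C b * .X - .C a : A[X])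
      simp only [Polynomial.eval₂_sub, Polynomial.eval₂_mul, Polynomial.eval₂_pow,
        Polynomial.eval₂_X, Polynomial.eval₂_C] at h
      simp only [Algebra.smul_def, AdjoinRoot.algebraMap_eq]
      linear_combination h⟩)
    (by ext <;> simp)
    (by ext; simp)

theorem isDistinguishedAt_X_sq_sub {I : Ideal A} {a b : A} (ha : a ∈ I) (hb : b ∈ I) :
    (.X ^ 2 - .C b * .X - .C a : A[X]).IsDistinguishedAt I where
  mem {n} hn := by
    nontriviality A
    have hdeg : (.X ^ 2 - .C b * .X - .C a : A[X]).natDegree = 2 := by compute_degree!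
    rw [hdeg] at hn
    interval_cases n <;> simp [ha, hb]
  monic := by monicity!

/-- Weierstrass preparation in degree two: a quadratic equation with coefficients in the ideal of
definition presents the same algebra over `A⟦X⟧` as over `A[X]`. -/
noncomputable def quotientSpanEquivQuadraticAlgebra {I : Ideal A} [IsAdicComplete I A] {a b : A}
    (ha : a ∈ I) (hb : b ∈ I) :
    (PowerSeries A ⧸ Ideal.span {(.X ^ 2 - .C b * .X - .C a : PowerSeries A)}) ≃ₐ[A]
      QuadraticAlgebra A a b :=
  (Ideal.quotientEquivAlgOfEq A (by simp)).trans
    ((isDistinguishedAt_X_sq_sub ha hb).algEquivQuotient.symm.trans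
      (adjoinRootEquivQuadraticAlgebra a b))

end Weierstrass

section PowerSeries

variable {n : ℕ}

section Equiv

variable (R : Type*) [CommRing R]

/-- `R⟦X₀, …, Xₙ⟧` as power series in the single variable `Xᵢ`. -/
noncomputable def finSuccAboveEquiv (i : Fin (n + 1)) :
    MvPowerSeries (Fin (n + 1)) R ≃ₐ[R] PowerSeries (MvPowerSeries (Fin n) R) :=
  (renameEquiv R i.cycleRange).trans (finSuccEquiv R n)

theorem finSuccAboveEquiv_X_self (i : Fin (n + 1)) :
    finSuccAboveEquiv R i (X i) = PowerSeries.X := by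
  simp [finSuccAboveEquiv, renameEquiv, finSuccEquiv_X_zero]

theorem finSuccAboveEquiv_X_succAbove (i : Fin (n + 1)) (j : Fin n) :
    finSuccAboveEquiv R i (X (i.succAbove j)) = PowerSeries.C (X j) := by
  simp [finSuccAboveEquiv, renameEquiv, finSuccEquiv_X_succ]

end Equiv

variable {R : Type*} [CommRing R]

instance isDomain_mvPowerSeries {σ : Type*} [IsDomain R] : IsDomain (MvPowerSeries σ R) :=
  NoZeroDivisors.to_isDomain _

theorem X_dvd_iff_constantCoeff_finSuccAboveEquiv {i : Fin (n + 1)}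
    {f : MvPowerSeries (Fin (n + 1)) R} :
    X i ∣ f ↔ PowerSeries.constantCoeff (finSuccAboveEquiv R i f) = 0 := by
  rw [← PowerSeries.X_dvd_iff, ← finSuccAboveEquiv_X_self, map_dvd_iff]

theorem X_pow_mem_span_range_X {σ : Type*} (i : σ) {e : ℕ} (he : e ≠ 0) :
    (X i ^ e : MvPowerSeries σ R) ∈ Ideal.span (Set.range X) :=
  Ideal.pow_mem_of_mem _ (Ideal.subset_span (Set.mem_range_self i)) e he.bot_lt

theorem prime_X [IsDomain R] (i : Fin (n + 1)) : Prime (X i : MvPowerSeries (Fin (n + 1)) R) := by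
  rw [← MulEquiv.prime_iff (finSuccAboveEquiv R i), finSuccAboveEquiv_X_self]
  exact PowerSeries.X_prime

theorem order_X_pow [Nontrivial R] {σ : Type*} (i : σ) (d : ℕ) :
    (X i ^ d : MvPowerSeries σ R).order = d := by
  rw [X_pow_eq, order_monomial_of_ne_zero one_ne_zero, Finsupp.degree_single]

-- The orders of `f ^ 2` and `-(g ^ 2 * h)` have different parities.
theorem eq_zero_of_sq_add_sq_mul_eq_zero {σ : Type*} [NoZeroDivisors R]
    {f g h : MvPowerSeries σ R} {d : ℕ} (hh : h.order = d) (hd : Odd d)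
    (hfg : f ^ 2 + g ^ 2 * h = 0) : f = 0 ∧ g = 0 := by
  have hg : g = 0 := by
    by_contra hg
    have hh0 : h ≠ 0 := by
      rintro rfl
      simp at hh
    have hf : f ≠ 0 := by
      rintro rfl
      exact mul_ne_zero (pow_ne_zero 2 hg) hh0 (by simpa using hfg)
    have horder : f.order + f.order = g.order + g.order + d := by
      rw [← order_mul, ← order_mul, ← hh, ← order_mul, ← sq, ← sq,
        eq_neg_of_add_eq_zero_left hfg, order_neg]
    rw [← ne_zero_iff_order_finite.1 hf, ← ne_zero_iff_order_finite.1 hg] at horder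
    norm_cast at horder
    grind
  exact ⟨by simpa [hg] using hfg, hg⟩

theorem X_dvd_of_X_dvd_sq_add_sq_mul [IsDomain R] {i j : Fin (n + 1)} (hij : j ≠ i) {d : ℕ}
    (hd : Odd d) {f g : MvPowerSeries (Fin (n + 1)) R} (h : X i ∣ f ^ 2 + g ^ 2 * X j ^ d) :
    X i ∣ f ∧ X i ∣ g := by
  obtain ⟨l, rfl⟩ := Fin.exists_succAbove_eq hij
  rw [X_dvd_iff_constantCoeff_finSuccAboveEquiv] at h ⊢
  rw [X_dvd_iff_constantCoeff_finSuccAboveEquiv]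
  simp only [map_add, map_mul, map_pow, finSuccAboveEquiv_X_succAbove,
    PowerSeries.constantCoeff_C] at h
  exact eq_zero_of_sq_add_sq_mul_eq_zero (order_X_pow l d) hd h

theorem natCast_le_order_of_mem_pow {σ : Type*} {I : Ideal (MvPowerSeries σ R)}
    (hI : I ≤ RingHom.ker constantCoeff) {n : ℕ} {f : MvPowerSeries σ R} (hf : f ∈ I ^ n) :
    (n : ℕ∞) ≤ f.order := by
  induction n generalizing f with
  | zero => simp
  | succ n ih =>
    rw [pow_succ] at hf
    induction hf using Submodule.mul_induction_on' with
    | mem_mul_mem g hg h hh =>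
      have hh1 : 1 ≤ h.order := one_le_order_iff_constCoeff_eq_zero.2 (hI hh)
      push_cast
      exact (add_le_add (ih hg) hh1).trans le_order_mul
    | add g _ h _ hg hh => exact (le_min hg hh).trans min_order_le_add

theorem X_sq_add_mem_sq_and_notMem_cube {σ : Type*} [Nontrivial R]
    {I : Ideal (MvPowerSeries σ R)} (hI : I ≤ RingHom.ker constantCoeff) {i : σ} (hi : X i ∈ I)
    {g : MvPowerSeries σ R} (hg : g ∈ I ^ 3) :
    X i ^ 2 + g ∈ I ^ 2 ∧ X i ^ 2 + g ∉ I ^ 3 := by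
  refine ⟨add_mem (Ideal.pow_mem_pow hi 2) (Ideal.pow_le_pow_right (by simp) hg), fun h ↦ ?_⟩
  have h3 := natCast_le_order_of_mem_pow hI (((I ^ 3).add_mem_iff_left hg).1 h)
  rw [order_X_pow] at h3
  norm_num at h3

end PowerSeries

section Surface

section CommRing

/-- The equation of the elliptic double point: `EDP_{m,n}^{(1)}` is the case `a = m / 2`,
`b = n / 2`, `c = m + 1`, `d = n + 1`. The variables `x`, `y`, `z` are `X 0`, `X 1`, `X 2`. -/
noncomputable def equation (R : Type*) [CommRing R] (a b c d : ℕ) : MvPowerSeries (Fin 3) R :=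
  X 2 ^ 2 + X 2 * X 0 ^ a * X 1 ^ b + X 0 ^ c + X 1 ^ d

/-- The free quadratic `R⟦x, y⟧`-algebra with equation `z² + x^a y^b z + x^c + y^d`. -/
abbrev DoubleCover (R : Type*) [CommRing R] (a b c d : ℕ) : Type _ :=
  QuadraticAlgebra (MvPowerSeries (Fin 2) R) (-(X 0 ^ c + X 1 ^ d)) (-(X 0 ^ a * X 1 ^ b))

variable {R : Type*} [CommRing R] {a b c d : ℕ}

theorem finSuccAboveEquiv_equation :
    finSuccAboveEquiv R (2 : Fin 3) (equation R a b c d) =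
      .X ^ 2 - .C (-(X 0 ^ a * X 1 ^ b)) * .X - .C (-(X 0 ^ c + X 1 ^ d)) := by
  have hx : finSuccAboveEquiv R (2 : Fin 3) (X 0) = .C (X 0) :=
    finSuccAboveEquiv_X_succAbove (n := 2) R 2 0
  have hy : finSuccAboveEquiv R (2 : Fin 3) (X 1) = .C (X 1) :=
    finSuccAboveEquiv_X_succAbove (n := 2) R 2 1
  simp only [equation, map_add, map_mul, map_pow, map_neg, hx, hy, finSuccAboveEquiv_X_self]
  ring

/-- The isomorphism of `R⟦x, y, z⟧ / (z² + z x^a y^b + x^c + y^d)` with its Weierstrass form in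
`z`. -/
noncomputable def quotientSpanEquivDoubleCover (ha : a ≠ 0) (hc : c ≠ 0) (hd : d ≠ 0) :
    (MvPowerSeries (Fin 3) R ⧸ Ideal.span {equation R a b c d}) ≃+* DoubleCover R a b c d :=
  let m : Ideal (MvPowerSeries (Fin 2) R) := Ideal.span (Set.range X)
  have hconst : -(X 0 ^ c + X 1 ^ d) ∈ m :=
    m.neg_mem (m.add_mem (X_pow_mem_span_range_X 0 hc) (X_pow_mem_span_range_X 1 hd))
  have hlin : -(X 0 ^ a * X 1 ^ b) ∈ m :=
    m.neg_mem (m.mul_mem_right _ (X_pow_mem_span_range_X 0 ha))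
  (Ideal.quotientEquiv _ _ (finSuccAboveEquiv R (2 : Fin 3)).toRingEquiv (by
    rw [Ideal.map_span, Set.image_singleton, ← finSuccAboveEquiv_equation]
    rfl)).trans (quotientSpanEquivQuadraticAlgebra hconst hlin).toRingEquiv

theorem equation_mem_sq_and_notMem_cube [Nontrivial R] {I : Ideal (MvPowerSeries (Fin 3) R)}
    (hI : I ≤ RingHom.ker constantCoeff) (hX : ∀ i, X i ∈ I) (ha : a ≠ 0) (hb : b ≠ 0)
    (hc : 3 ≤ c) (hd : 3 ≤ d) : equation R a b c d ∈ I ^ 2 ∧ equation R a b c d ∉ I ^ 3 := by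
  have hmixed : X 2 * X 0 ^ a * X 1 ^ b ∈ I ^ 3 := by
    rw [pow_three']
    exact Ideal.mul_mem_mul
      (Ideal.mul_mem_mul (hX 2) (I.pow_mem_of_mem (hX 0) a ha.bot_lt))
      (I.pow_mem_of_mem (hX 1) b hb.bot_lt)
  have hx : X 0 ^ c ∈ I ^ 3 := Ideal.pow_le_pow_right hc (Ideal.pow_mem_pow (hX 0) c)
  have hy : X 1 ^ d ∈ I ^ 3 := Ideal.pow_le_pow_right hd (Ideal.pow_mem_pow (hX 1) d)
  have htail := add_mem (add_mem hmixed hx) hy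
  simpa only [equation, add_assoc] using X_sq_add_mem_sq_and_notMem_cube hI (hX 2) htail

end CommRing

section Field

variable {k : Type*} [Field k] {a b c d : ℕ}

instance isPrincipalIdealRing_mvPowerSeries_fin_one :
    IsPrincipalIdealRing (MvPowerSeries (Fin 1) k) :=
  let e : PowerSeries k ≃ₐ[k] MvPowerSeries (Fin 1) k :=
    renameEquiv k (Equiv.ofUnique Unit (Fin 1))
  IsPrincipalIdealRing.of_surjective (e : PowerSeries k →+* MvPowerSeries (Fin 1) k) e.surjective

instance uniqueFactorizationMonoid_mvPowerSeries_fin_two :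
    UniqueFactorizationMonoid (MvPowerSeries (Fin 2) k) :=
  (finSuccEquiv k 1).symm.toMulEquiv.uniqueFactorizationMonoid inferInstance

theorem isDomain_doubleCover (ha : a ≠ 0) (hc : c ≠ 0) (hd : Odd d) :
    IsDomain (DoubleCover k a b c d) := by
  refine isDomain_quadraticAlgebra fun r hr ↦ ?_
  have hdvd : (X 0 : MvPowerSeries (Fin 2) k) ∣ r ^ 2 + 1 ^ 2 * X 1 ^ d := by
    have hx : (X 0 : MvPowerSeries (Fin 2) k) ∣ -(X 0 ^ c) - X 0 ^ a * X 1 ^ b * r :=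
      (dvd_neg.2 (dvd_pow_self _ hc)).sub (((dvd_pow_self _ ha).mul_right _).mul_right _)
    convert hx using 1
    linear_combination hr
  exact (prime_X 0).not_dvd_one (X_dvd_of_X_dvd_sq_add_sq_mul one_ne_zero hd hdvd).2

theorem isIntegrallyClosed_doubleCover [CharP k 2] [IsDomain (DoubleCover k a b c d)]
    (hc : Odd c) (hd : Odd d) : IsIntegrallyClosed (DoubleCover k a b c d) := by
  have : CharP (MvPowerSeries (Fin 2) k) 2 :=
    charP_of_injective_algebraMap (FaithfulSMul.algebraMap_injective k _) 2
  refine isIntegrallyClosed_quadraticAlgebra_of_charTwo fun π r s hπ hπb hπrs ↦ ?_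
  have dvd_of_dvd_X (i j : Fin 2) (hij : j ≠ i) {e e' : ℕ} (he : e ≠ 0) (he' : Odd e')
      (hi : π ∣ X i) (h : π ∣ r ^ 2 + s ^ 2 * X j ^ e' + X i ^ e * s ^ 2) : π ∣ r ∧ π ∣ s := by
    have hassoc := hπ.associated_of_dvd (prime_X i) hi
    rw [hassoc.dvd_iff_dvd_left] at h
    rw [hassoc.dvd_iff_dvd_left, hassoc.dvd_iff_dvd_left]
    refine X_dvd_of_X_dvd_sq_add_sq_mul hij he' ?_
    exact (dvd_add_left ((dvd_pow_self _ he).mul_right _)).1 h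
  rcases hπ.dvd_or_dvd (dvd_neg.1 hπb) with hx | hy
  · refine dvd_of_dvd_X 0 1 one_ne_zero hc.pos.ne' hd (hπ.dvd_of_dvd_pow hx) ?_
    convert hπrs using 1
    ring
  · refine dvd_of_dvd_X 1 0 zero_ne_one hd.pos.ne' hc (hπ.dvd_of_dvd_pow hy) ?_
    convert hπrs using 1
    ring

end Field

end Surface

end EllipticDoublePoint

open EllipticDoublePoint in
theorem stmt10_general (k : Type*) [Field k] [CharP k 2] {a b c d : ℕ} (ha : a ≠ 0) (hb : b ≠ 0)
    (hc : Odd c) (hc' : 3 ≤ c) (hd : Odd d) (hd' : 3 ≤ d)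
    (F : MvPowerSeries (Fin 3) k)
    (hF : F = (X 2 : MvPowerSeries (Fin 3) k) ^ 2 + X 2 * X 0 ^ a * X 1 ^ b
      + X 0 ^ c + X 1 ^ d)
    (m : Ideal (MvPowerSeries (Fin 3) k))
    (hm : m = Ideal.span {(X 0 : MvPowerSeries (Fin 3) k), X 1, X 2}) :
    IsDomain (MvPowerSeries (Fin 3) k ⧸ Ideal.span {F}) ∧
    IsIntegrallyClosed (MvPowerSeries (Fin 3) k ⧸ Ideal.span {F}) ∧
    F ∈ m ^ 2 ∧ F ∉ m ^ 3 := by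
  obtain rfl : F = equation k a b c d := hF
  let e := quotientSpanEquivDoubleCover (R := k) (b := b) ha hc.pos.ne' hd.pos.ne'
  have : IsDomain (DoubleCover k a b c d) := isDomain_doubleCover ha hc.pos.ne' hd
  have : IsIntegrallyClosed (DoubleCover k a b c d) := isIntegrallyClosed_doubleCover hc hd
  have hm_le : m ≤ RingHom.ker constantCoeff := by
    rw [hm, Ideal.span_le]
    rintro _ (rfl | rfl | rfl) <;> exact constantCoeff_X _
  have hX (i : Fin 3) : X i ∈ m := by
    rw [hm]
    fin_cases i <;> exact Ideal.subset_span (by simp)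
  exact ⟨e.toMulEquiv.isDomain _, .of_equiv e.symm,
    equation_mem_sq_and_notMem_cube hm_le hX ha hb hc' hd'⟩

/-- For a field `k` of characteristic 2, the elliptic double point
`EDP_{4,4}^{(1)}`, i.e. `R = k[[x,y,z]]/(z² + zx²y² + x⁵ + y⁵)`, is a normal domain
(a domain which is integrally closed), and the origin is a double point: the defining
series lies in `m²` but not `m³`, where `m = (x, y, z)` is the maximal ideal
(so the multiplicity of the maximal ideal of `R` is 2). -/
theorem stmt10 (k : Type*) [Field k] [CharP k 2]
    (F : MvPowerSeries (Fin 3) k)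
    (hF : F = (X 2 : MvPowerSeries (Fin 3) k) ^ 2 + X 2 * X 0 ^ 2 * X 1 ^ 2
      + X 0 ^ 5 + X 1 ^ 5)
    (m : Ideal (MvPowerSeries (Fin 3) k))
    (hm : m = Ideal.span {(X 0 : MvPowerSeries (Fin 3) k), X 1, X 2}) :
    IsDomain (MvPowerSeries (Fin 3) k ⧸ Ideal.span {F}) ∧
    IsIntegrallyClosed (MvPowerSeries (Fin 3) k ⧸ Ideal.span {F}) ∧
    F ∈ m ^ 2 ∧ F ∉ m ^ 3 := by
  exact stmt10_general k two_ne_zero two_ne_zero (by decide) (by decide)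
    (by decide) (by decide) F hF m hm
end

section
/- Let k be a field of characteristic 2 and let S = k[[u,v]] with an action of Z/2Z = {1, g} that is free outside the closed point. Set x = u·g(u), y = v·g(v), z = u·g(v) + g(u)·v, a = u + g(u), b = v + g(v). Then the invariant ring S^G equals k[[x,y,z]]/(z² + abz + a²y + b²x), where a, b are expressed as power series in x, y, z. -/
/- Freeness outside the closed point forces every fixed element of `𝔪 = (u, v)` into `𝔪²`: by
Nakayama, a fixed regular parameter would make `(u + g u, v + g v)` a principal ideal, which cannot
contain a power of `𝔪`. So `a, b ∈ 𝔪²`, and `ρ : k[[X, Y]] → S`, `(X, Y) ↦ (x, y)`, agrees to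
leading order with `(X, Y) ↦ (u², v²)`. Hence `1, u, v, u * g v` span `S` over `k[[x, y]]`, and
`1, u, v` are independent over it.

Since `a, b` is a regular sequence, expanding a fixed element in these generators writes it as
`ρ P + (t * g u * v + g (t * g u * v))`; expanding `t` as well puts the trace into
`(x, y, z) S^G`, and completeness gives that `x, y, z` topologically generate `S^G`.

Weierstrass division by `f = Z² + ABZ + A²Y + B²X` reduces the kernel to relations
`ρ P + ρ Q * z = 0`. As `z = u * b + v * a`, and the relation puts `ρ Q * a` and `ρ Q * b` into the
image of `ρ`, this becomes a relation between `1, u, v`, so `P = Q = 0`. -/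

open MvPowerSeries

/-- The subalgebra of elements fixed by an algebra endomorphism `g`. -/
def fixedSubalgebra {k S : Type*} [CommSemiring k] [CommRing S] [Algebra k S]
    (g : S →ₐ[k] S) : Subalgebra k S where
  carrier := {s | g s = s}
  mul_mem' := by
    intro a b ha hb
    simp only [Set.mem_setOf_eq, map_mul] at *
    rw [ha, hb]
  add_mem' := by
    intro a b ha hb
    simp only [Set.mem_setOf_eq, map_add] at *
    rw [ha, hb]
  algebraMap_mem' := by
    intro r
    simp [Set.mem_setOf_eq]

open IsLocalRing

/-! ### Ideals and homomorphisms of local algebras -/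

section RingHom
variable {R S : Type*} [CommRing R] [CommRing S]

theorem map_sub_map_mem_pow {F : Type*} [FunLike F R S] [RingHomClass F R S] {I : Ideal R}
    {J : Ideal S} {φ ψ : F} {p n : ℕ}
    (hφ : I.map φ ≤ J ^ p) (hψ : I.map ψ ≤ J ^ p) (h : ∀ r, φ r - ψ r ∈ J ^ (p + 1)) {r : R}
    (hr : r ∈ I ^ n) : φ r - ψ r ∈ J ^ (p * n + 1) := by
  induction n generalizing r with
  | zero => exact Ideal.pow_le_pow_right (by lia) (h r)
  | succ n ih =>
    rw [pow_succ] at hr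
    induction hr using Submodule.mul_induction_on' with
    | mem_mul_mem s hs t ht =>
      have hφs : φ s ∈ J ^ (p * n) := by
        rw [pow_mul]
        exact Ideal.pow_right_mono hφ n (Ideal.map_pow φ I n ▸ Ideal.mem_map_of_mem φ hs)
      have h₁ := Ideal.mul_mem_mul hφs (h t)
      have h₂ := Ideal.mul_mem_mul (ih hs) (hψ (Ideal.mem_map_of_mem ψ ht))
      rw [← pow_add] at h₁ h₂
      have key : φ (s * t) - ψ (s * t) = φ s * (φ t - ψ t) + (φ s - ψ s) * ψ t := by
        rw [map_mul, map_mul]; ring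
      rw [key]
      exact add_mem (Ideal.pow_le_pow_right (by lia) h₁) (Ideal.pow_le_pow_right (by lia) h₂)
    | add s _ t _ hs ht =>
      rw [map_add, map_add, add_sub_add_comm]
      exact add_mem hs ht

theorem sq_sub_mem_pow_three {I : Ideal R} {x y z a b : R}
    (hx : x ∈ I) (hy : y ∈ I) (hz : z ∈ I) (ha : a ∈ I) (hb : b ∈ I) :
    z ^ 2 - (z ^ 2 + a * b * z + a ^ 2 * y + b ^ 2 * x) ∈ I ^ 3 := by
  have hmul {c d e : R} (hc : c ∈ I) (hd : d ∈ I) (he : e ∈ I) : c * d * e ∈ I ^ 3 := by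
    rw [pow_succ, pow_two]
    exact Ideal.mul_mem_mul (Ideal.mul_mem_mul hc hd) he
  convert neg_mem (add_mem (add_mem (hmul ha hb hz) (hmul ha ha hy)) (hmul hb hb hx)) using 1
  ring

theorem span_pair_mul_add_mul_of_isUnit {α : R} (hα : IsUnit α) (β u v : R) :
    Ideal.span {v, α * u + β * v} = Ideal.span {u, v} := by
  rw [Ideal.span_pair_add_mul_left, Ideal.span_insert, Ideal.span_singleton_mul_left_unit hα,
    sup_comm, ← Ideal.span_insert]

theorem le_of_le_sup_maximalIdeal_mul [IsLocalRing S] [IsNoetherianRing S] {I J : Ideal S}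
    (h : I ≤ J ⊔ maximalIdeal S * I) : I ≤ J :=
  Submodule.le_of_le_smul_of_le_jacobson_bot (IsNoetherian.noetherian I)
    (maximalIdeal_le_jacobson ⊥) h

end RingHom

theorem isRelPrime_of_dvd_of_dvd_mul {S : Type*} [CommRing S] [IsDomain S] {p q : S} (hp : p ≠ 0)
    (hpq : ∀ e, p ∣ q * e → p ∣ e) : IsRelPrime p q := by
  rintro d ⟨e, rfl⟩ ⟨f, rfl⟩
  obtain ⟨h, hh⟩ := hpq e ⟨f, by ring⟩
  refine .of_mul_eq_one h (mul_right_cancel₀ (right_ne_zero_of_mul hp) ?_)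
  linear_combination -hh

section LocalAlgebra
variable {k R S : Type*} [Field k] [CommRing R] [IsLocalRing R] [Algebra k R]
  [CommRing S] [IsLocalRing S] [Algebra k S]

theorem exists_sub_algebraMap_mem_maximalIdeal
    (hS : Function.Surjective (algebraMap k (ResidueField S))) (s : S) :
    ∃ c : k, s - algebraMap k S c ∈ maximalIdeal S := by
  obtain ⟨c, hc⟩ := hS (residue S s)
  refine ⟨c, (residue_eq_zero_iff _).mp ?_⟩
  rw [map_sub, ← hc, sub_eq_zero]
  rfl

theorem map_maximalIdeal_le (hS : Function.Surjective (algebraMap k (ResidueField S)))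
    (φ : R →ₐ[k] S) : (maximalIdeal R).map φ ≤ maximalIdeal S := by
  rw [Ideal.map_le_iff_le_comap]
  intro r hr
  obtain ⟨c, hc⟩ := exists_sub_algebraMap_mem_maximalIdeal hS (φ r)
  obtain rfl | hc₀ := eq_or_ne c 0
  · simpa using hc
  · have hunit : IsUnit (r - algebraMap k R c) := by
      by_contra hn
      have := sub_mem hr hn
      rw [sub_sub_cancel] at this
      exact this (hc₀.isUnit.map _)
    have := hunit.map φ
    rw [map_sub, φ.commutes] at this
    exact absurd this hc

/-- Nakayama applied to the ideal generated by all `φ r - ψ r`. -/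
theorem algHom_sub_mem_span [IsNoetherianRing S]
    (hR : Function.Surjective (algebraMap k (ResidueField R)))
    (hS : Function.Surjective (algebraMap k (ResidueField S)))
    {P : Set R} (hP : maximalIdeal R = Ideal.span P) (φ ψ : R →ₐ[k] S) (r : R) :
    φ r - ψ r ∈ Ideal.span ((fun p => φ p - ψ p) '' P) := by
  set J := Ideal.span ((fun p => φ p - ψ p) '' P)
  set I := Ideal.span (Set.range fun r => φ r - ψ r)
  have hmem (r : R) : φ r - ψ r ∈ I := Ideal.subset_span (Set.mem_range_self r)
  have hmax {m : R} (hm : m ∈ maximalIdeal R) : φ m - ψ m ∈ J ⊔ maximalIdeal S * I := by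
    rw [hP] at hm
    induction hm using Submodule.span_induction with
    | mem p hp => exact Ideal.mem_sup_left (Ideal.subset_span ⟨p, hp, rfl⟩)
    | zero => simp
    | add s t _ _ hs ht =>
      rw [map_add, map_add, add_sub_add_comm]
      exact add_mem hs ht
    | smul c s hs ih =>
      have key : φ (c • s) - ψ (c • s) = φ c * (φ s - ψ s) + ψ s * (φ c - ψ c) := by
        rw [smul_eq_mul, map_mul, map_mul]; ring
      have hs : s ∈ maximalIdeal R := hP ▸ hs
      rw [key]
      exact add_mem (Ideal.mul_mem_left _ _ ih) (Ideal.mem_sup_right <| Ideal.mul_mem_mul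
        (map_maximalIdeal_le hS ψ (Ideal.mem_map_of_mem ψ hs)) (hmem c))
  have hI : I ≤ J ⊔ maximalIdeal S * I := by
    rw [Ideal.span_le]
    rintro _ ⟨r, rfl⟩
    obtain ⟨c, hc⟩ := exists_sub_algebraMap_mem_maximalIdeal hR r
    simpa using hmax hc
  exact le_of_le_sup_maximalIdeal_mul hI (hmem r)

theorem algHom_sub_mem_pow [IsNoetherianRing S]
    (hR : Function.Surjective (algebraMap k (ResidueField R)))
    (hS : Function.Surjective (algebraMap k (ResidueField S)))
    {P : Set R} (hP : maximalIdeal R = Ideal.span P) {φ ψ : R →ₐ[k] S} {d n : ℕ}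
    (hφ : ∀ p ∈ P, φ p ∈ maximalIdeal S ^ d)
    (h : ∀ p ∈ P, φ p - ψ p ∈ maximalIdeal S ^ (d + 1)) {r : R} (hr : r ∈ maximalIdeal R ^ n) :
    φ r - ψ r ∈ maximalIdeal S ^ (d * n + 1) := by
  have hle {χ : R →ₐ[k] S} (hχ : ∀ p ∈ P, χ p ∈ maximalIdeal S ^ d) :
      (maximalIdeal R).map χ ≤ maximalIdeal S ^ d := by
    rw [hP, Ideal.map_span, Ideal.span_le]
    exact Set.image_subset_iff.mpr hχ
  have hψ (p : R) (hp : p ∈ P) : ψ p ∈ maximalIdeal S ^ d := by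
    have := sub_mem (hφ p hp) (Ideal.pow_le_pow_right d.le_succ (h p hp))
    rwa [sub_sub_cancel] at this
  exact map_sub_map_mem_pow (hle hφ) (hle hψ)
    (fun s => Ideal.span_le.mpr (Set.image_subset_iff.mpr h) (algHom_sub_mem_span hR hS hP φ ψ s))
    hr

theorem algHom_ext_of_maximalIdeal_eq_span [IsNoetherianRing S]
    (hR : Function.Surjective (algebraMap k (ResidueField R)))
    (hS : Function.Surjective (algebraMap k (ResidueField S)))
    {P : Set R} (hP : maximalIdeal R = Ideal.span P) {φ ψ : R →ₐ[k] S}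
    (h : ∀ p ∈ P, φ p = ψ p) : φ = ψ := by
  ext r
  have hr := algHom_sub_mem_span hR hS hP φ ψ r
  rw [Ideal.span_eq_bot.mpr (by rintro _ ⟨p, hp, rfl⟩; exact sub_eq_zero.mpr (h p hp))] at hr
  exact sub_eq_zero.mp hr

theorem maximalIdeal_eq_span_pair_of_notMem_sq {u v q : S} (hm : maximalIdeal S = Ideal.span {u, v})
    (hq : q ∈ maximalIdeal S) (hq' : q ∉ maximalIdeal S ^ 2) :
    ∃ p, maximalIdeal S = Ideal.span {p, q} := by
  have hu : u ∈ maximalIdeal S := hm ▸ Ideal.subset_span (by simp)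
  have hv : v ∈ maximalIdeal S := hm ▸ Ideal.subset_span (by simp)
  obtain ⟨α, β, rfl⟩ := Ideal.mem_span_pair.mp (hm ▸ hq)
  have hunit : IsUnit α ∨ IsUnit β := by
    by_contra! h
    rw [pow_two] at hq'
    exact hq' (add_mem (Ideal.mul_mem_mul h.1 hu) (Ideal.mul_mem_mul h.2 hv))
  obtain hα | hβ := hunit
  · exact ⟨v, by rw [hm, span_pair_mul_add_mul_of_isUnit hα]⟩
  · exact ⟨u, by rw [hm, Ideal.span_pair_comm, add_comm, span_pair_mul_add_mul_of_isUnit hβ]⟩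

theorem mem_maximalIdeal_sq_of_map_eq_self [IsNoetherianRing S]
    (hS : Function.Surjective (algebraMap k (ResidueField S))) {g : S →ₐ[k] S} {u v q : S} {n : ℕ}
    (hm : maximalIdeal S = Ideal.span {u, v}) (huv : IsRelPrime (u ^ n) (v ^ n))
    (hfree : maximalIdeal S ^ n ≤ Ideal.span {u - g u, v - g v})
    (hq : q ∈ maximalIdeal S) (hgq : g q = q) : q ∈ maximalIdeal S ^ 2 := by
  by_contra hq'
  obtain ⟨p, hp⟩ := maximalIdeal_eq_span_pair_of_notMem_sq hm hq hq'
  have hdvd (s : S) : p - g p ∣ s - g s := by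
    have := algHom_sub_mem_span hS hS hp (AlgHom.id k S) g s
    simpa [Set.image_pair, hgq, Ideal.span_pair_zero, Ideal.mem_span_singleton] using this
  have hle : maximalIdeal S ^ n ≤ Ideal.span {p - g p} :=
    hfree.trans (Ideal.span_le.mpr (Set.pair_subset (Ideal.mem_span_singleton.mpr (hdvd u))
      (Ideal.mem_span_singleton.mpr (hdvd v))))
  have hpow {w : S} (hw : w ∈ ({u, v} : Set S)) : p - g p ∣ w ^ n :=
    Ideal.mem_span_singleton.mp (hle (Ideal.pow_mem_pow (hm ▸ Ideal.subset_span hw) n))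
  have hpm : p ∈ maximalIdeal S := hp ▸ Ideal.subset_span (Set.mem_insert p {q})
  exact sub_mem hpm (map_maximalIdeal_le hS g (Ideal.mem_map_of_mem g hpm))
    (huv (hpow (by simp)) (hpow (by simp)))

end LocalAlgebra

/-! ### Power series rings -/

section PowerSeries
variable {σ R k : Type*}

instance [CommRing R] (p : ℕ) [CharP R p] : CharP (MvPowerSeries σ R) p :=
  charP_of_injective_ringHom C_injective p

theorem X_pow_dvd_of_dvd_X_pow_mul [CommRing R] {i j : σ} (hij : i ≠ j) {m n : ℕ}
    {s : MvPowerSeries σ R} (h : X i ^ m ∣ X j ^ n * s) : X i ^ m ∣ s := by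
  rw [X_pow_dvd_iff] at h ⊢
  intro d hd
  have := h (Finsupp.single j n + d) (by simpa [hij] using hd)
  rwa [X_pow_eq, coeff_add_monomial_mul, one_mul] at this

theorem X_pow_ne_zero [CommRing R] [Nontrivial R] (i : σ) (n : ℕ) :
    (X i : MvPowerSeries σ R) ^ n ≠ 0 := by
  rw [X_pow_eq]
  intro h
  simpa [coeff_monomial_same] using congrArg (coeff (Finsupp.single i n)) h

theorem mem_span_range_X_pow_iff [Finite σ] [CommRing R] {n : ℕ} {s : MvPowerSeries σ R} :
    s ∈ Ideal.span (Set.range X) ^ n ↔ ∀ d : σ →₀ ℕ, d.degree < n → coeff d s = 0 := by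
  let e := (toAdicCompletionAlgEquiv σ R).toRingEquiv
  have hmap : Ideal.map e (Ideal.span (Set.range X)) =
      (MvPolynomial.idealOfVars σ R).map (algebraMap ..) := by
    simp_rw [Ideal.map_span, ← Set.range_comp]
    congr 2; ext1
    simp [e, AdicCompletion.algebraMap_apply, ← MvPolynomial.coe_X, toAdicCompletion_coe]
  have hker : e s ∈ Ideal.map e (Ideal.span (Set.range X) ^ n) ↔
      AdicCompletion.eval (MvPolynomial.idealOfVars σ R) (MvPolynomial σ R) n (e s) = 0 := by
    rw [Ideal.map_pow, hmap, ← LinearMap.mem_ker, ← AdicCompletion.pow_smul_top_eq_ker_eval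
      (MvPolynomial.idealOfVars_fg σ R), ← Ideal.map_pow, Ideal.smul_top_eq_map]
    rfl
  have heval : AdicCompletion.eval (MvPolynomial.idealOfVars σ R) (MvPolynomial σ R) n (e s) =
      Ideal.Quotient.mk (MvPolynomial.idealOfVars σ R ^ n • ⊤) (truncTotal n s) :=
    toAdicCompletion_apply_eq_mk_truncTotal
  rw [← Ideal.comap_map_of_bijective e e.bijective (I := Ideal.span (Set.range X) ^ n),
    Ideal.mem_comap, hker, heval, Ideal.Quotient.eq_zero_iff_mem, smul_eq_mul, Ideal.mul_top,
    MvPolynomial.mem_pow_idealOfVars_iff']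
  exact forall₂_congr fun d hd => by rw [coeff_truncTotal s hd]

theorem mem_span_range_X_iff [Finite σ] [CommRing R] {s : MvPowerSeries σ R} :
    s ∈ Ideal.span (Set.range X) ↔ constantCoeff s = 0 := by
  rw [← pow_one (Ideal.span _), mem_span_range_X_pow_iff]
  simp [Finsupp.degree_eq_zero_iff]

theorem maximalIdeal_eq_span_range_X [Finite σ] [Field k] :
    maximalIdeal (MvPowerSeries σ k) = Ideal.span (Set.range X) := by
  ext s
  rw [mem_span_range_X_iff, mem_maximalIdeal, mem_nonunits_iff,
    isUnit_iff_constantCoeff, isUnit_iff_ne_zero, not_not]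

theorem surjective_algebraMap_residueField [Field k] :
    Function.Surjective (algebraMap k (ResidueField (MvPowerSeries σ k))) := by
  intro r
  obtain ⟨s, rfl⟩ := residue_surjective r
  refine ⟨constantCoeff s, ?_⟩
  rw [IsScalarTower.algebraMap_apply k (MvPowerSeries σ k), ResidueField.algebraMap_eq,
    ← sub_eq_zero, ← map_sub, residue_eq_zero_iff, mem_maximalIdeal,
    mem_nonunits_iff, isUnit_iff_constantCoeff]
  simp [MvPowerSeries.algebraMap_apply]

theorem X_mem_maximalIdeal [Field k] [Finite σ] (i : σ) : X i ∈ maximalIdeal (MvPowerSeries σ k) :=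
  maximalIdeal_eq_span_range_X (σ := σ) (k := k) ▸ Ideal.subset_span (Set.mem_range_self i)

theorem mem_maximalIdeal_pow_iff [Field k] [Finite σ] {n : ℕ} {s : MvPowerSeries σ k} :
    s ∈ maximalIdeal (MvPowerSeries σ k) ^ n ↔ ∀ d : σ →₀ ℕ, d.degree < n → coeff d s = 0 := by
  rw [maximalIdeal_eq_span_range_X, mem_span_range_X_pow_iff]

theorem eq_zero_of_forall_mem_maximalIdeal_pow [Field k] [Finite σ] {s : MvPowerSeries σ k}
    (h : ∀ n, s ∈ maximalIdeal (MvPowerSeries σ k) ^ n) : s = 0 :=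
  ext fun d => mem_maximalIdeal_pow_iff.mp (h (d.degree + 1)) d d.degree.lt_succ_self

theorem maximalIdeal_eq_span_X_zero_X_one [Field k] :
    maximalIdeal (MvPowerSeries (Fin 2) k) = Ideal.span {X 0, X 1} := by
  rw [maximalIdeal_eq_span_range_X]
  congr 1
  ext
  simp [Fin.exists_fin_two, eq_comm]

theorem isRelPrime_X_pow [Field k] {i j : σ} (hij : i ≠ j) (n : ℕ) :
    IsRelPrime (X i ^ n : MvPowerSeries σ k) (X j ^ n) := by
  have : IsDomain (MvPowerSeries σ k) := NoZeroDivisors.to_isDomain _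
  exact isRelPrime_of_dvd_of_dvd_mul (X_pow_ne_zero i n)
    fun _ => X_pow_dvd_of_dvd_X_pow_mul hij

theorem map_span_range_X_ne_top [Finite σ] [Field k] {S : Type*} [CommRing S] [IsLocalRing S]
    [Algebra k S] (hS : Function.Surjective (algebraMap k (ResidueField S)))
    (φ : MvPowerSeries σ k →ₐ[k] S) : (Ideal.span (Set.range X)).map φ ≠ ⊤ := by
  rw [← maximalIdeal_eq_span_range_X]
  exact ne_top_of_le_ne_top Ideal.IsPrime.ne_top' (map_maximalIdeal_le hS φ)

end PowerSeries

/-! ### Independence over deformations of the expansion map -/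

section Independence
variable {σ k : Type*}

theorem coeff_expand_mul_X [CommRing k] {p : ℕ} (hp : p ≠ 0) (s : MvPowerSeries σ k) (i : σ)
    (d : σ →₀ ℕ) : coeff (p • d + Finsupp.single i 1) (expand p hp s * X i) = coeff d s := by
  rw [X, coeff_add_mul_monomial, mul_one, coeff_expand_smul]

theorem coeff_expand_mul_X_of_not_modEq [CommRing k] {p : ℕ} (hp : p ≠ 0) (s : MvPowerSeries σ k)
    {i : σ} {d : σ →₀ ℕ} (hd : ¬ d i ≡ 1 [MOD p]) : coeff d (expand p hp s * X i) = 0 := by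
  classical
  rw [X, coeff_mul_monomial, mul_one]
  split_ifs with hid
  · refine coeff_expand_of_not_dvd p hp s (i := i) fun hdvd => hd ?_
    rw [Finsupp.single_le_iff] at hid
    simpa using ((Nat.modEq_iff_dvd' hid).mpr (by simpa using hdvd)).symm
  · rfl

theorem expand_sub_map_mem_pow [Field k] [Finite σ] {p n : ℕ} (hp : p ≠ 0)
    {ρ : MvPowerSeries σ k →ₐ[k] MvPowerSeries σ k}
    (hρ : ∀ i, X i ^ p - ρ (X i) ∈ maximalIdeal (MvPowerSeries σ k) ^ (p + 1))
    {s : MvPowerSeries σ k} (hs : s ∈ maximalIdeal (MvPowerSeries σ k) ^ n) :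
    expand p hp s - ρ s ∈ maximalIdeal (MvPowerSeries σ k) ^ (p * n + 1) := by
  refine algHom_sub_mem_pow surjective_algebraMap_residueField surjective_algebraMap_residueField
    maximalIdeal_eq_span_range_X (Set.forall_mem_range.mpr fun i => ?_)
    (Set.forall_mem_range.mpr fun i => ?_) hs <;> rw [expand_X]
  exacts [Ideal.pow_mem_pow (X_mem_maximalIdeal i) p, hρ i]

theorem coeff_smul_expand_add_sum_expand_mul_X [CommRing k] [Fintype σ] {p : ℕ} (hp : 2 ≤ p)
    (P : MvPowerSeries σ k) (Q : σ → MvPowerSeries σ k) (d : σ →₀ ℕ) :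
    coeff (p • d) (expand p (by lia) P + ∑ i, expand p (by lia) (Q i) * X i) = coeff d P := by
  rw [map_add, map_sum, coeff_expand_smul, Finset.sum_eq_zero, add_zero]
  refine fun i _ => coeff_expand_mul_X_of_not_modEq (by lia) _ fun hmod => ?_
  have hdvd : p ∣ 1 := Nat.modEq_zero_iff_dvd.mp
    (hmod.symm.trans (Nat.modEq_zero_iff_dvd.mpr (Dvd.intro (d i) rfl)))
  exact Nat.not_dvd_of_pos_of_lt one_pos hp hdvd

theorem coeff_smul_add_single_expand_add_sum_expand_mul_X [CommRing k] [Fintype σ] {p : ℕ}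
    (hp : 2 ≤ p) (P : MvPowerSeries σ k) (Q : σ → MvPowerSeries σ k) (d : σ →₀ ℕ) (j : σ) :
    coeff (p • d + Finsupp.single j 1)
      (expand p (by lia) P + ∑ i, expand p (by lia) (Q i) * X i) = coeff d (Q j) := by
  have hdvd : ¬ p ∣ 1 := Nat.not_dvd_of_pos_of_lt one_pos hp
  have hj : ¬ p ∣ (p • d + Finsupp.single j 1 : σ →₀ ℕ) j := by
    simpa [Nat.dvd_add_right (Dvd.intro (d j) rfl)] using hdvd
  rw [map_add, coeff_expand_of_not_dvd p _ P hj, zero_add, map_sum, Finset.sum_eq_single j,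
    coeff_expand_mul_X]
  · refine fun i _ hij => coeff_expand_mul_X_of_not_modEq (by lia) _ fun hmod => ?_
    have hmod' : 0 ≡ 1 [MOD p] := by simpa [hij, Nat.ModEq] using hmod
    exact hdvd (Nat.modEq_zero_iff_dvd.mp hmod'.symm)
  · simp

theorem mem_pow_succ_of_map_add_sum_map_mul_X_eq_zero [Field k] [Fintype σ] {p n : ℕ} (hp : 2 ≤ p)
    {ρ : MvPowerSeries σ k →ₐ[k] MvPowerSeries σ k}
    (hρ : ∀ i, X i ^ p - ρ (X i) ∈ maximalIdeal (MvPowerSeries σ k) ^ (p + 1))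
    {P : MvPowerSeries σ k} {Q : σ → MvPowerSeries σ k} (h : ρ P + ∑ i, ρ (Q i) * X i = 0)
    (hP : P ∈ maximalIdeal (MvPowerSeries σ k) ^ n)
    (hQ : ∀ i, Q i ∈ maximalIdeal (MvPowerSeries σ k) ^ n) :
    P ∈ maximalIdeal (MvPowerSeries σ k) ^ (n + 1) ∧
      ∀ i, Q i ∈ maximalIdeal (MvPowerSeries σ k) ^ (n + 1) := by
  have hp₀ : p ≠ 0 := by lia
  have hQX : ∑ i, (expand p hp₀ (Q i) - ρ (Q i)) * X i ∈
      maximalIdeal (MvPowerSeries σ k) ^ (p * n + 2) := by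
    refine sum_mem fun i _ => ?_
    rw [show p * n + 2 = p * n + 1 + 1 from rfl, pow_succ]
    exact Ideal.mul_mem_mul (expand_sub_map_mem_pow hp₀ hρ (hQ i)) (X_mem_maximalIdeal i)
  have hW : expand p hp₀ P + ∑ i, expand p hp₀ (Q i) * X i =
      expand p hp₀ P - ρ P + ∑ i, (expand p hp₀ (Q i) - ρ (Q i)) * X i := by
    simp only [sub_mul, Finset.sum_sub_distrib]
    linear_combination h
  have hP' : P ∈ maximalIdeal (MvPowerSeries σ k) ^ (n + 1) := by
    have := add_mem (expand_sub_map_mem_pow hp₀ hρ hP) (Ideal.pow_le_pow_right (Nat.le_succ _) hQX)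
    rw [← hW, mem_maximalIdeal_pow_iff] at this
    rw [mem_maximalIdeal_pow_iff]
    intro d hd
    rw [← coeff_smul_expand_add_sum_expand_mul_X hp P Q]
    refine this _ ?_
    rw [map_nsmul, smul_eq_mul]
    exact Nat.lt_succ_of_le (Nat.mul_le_mul_left p (Nat.le_of_lt_succ hd))
  refine ⟨hP', fun j => ?_⟩
  have := add_mem (Ideal.pow_le_pow_right (n := p * (n + 1) + 1) (by lia)
    (expand_sub_map_mem_pow hp₀ hρ hP')) hQX
  rw [← hW, mem_maximalIdeal_pow_iff] at this
  rw [mem_maximalIdeal_pow_iff]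
  intro d hd
  rw [← coeff_smul_add_single_expand_add_sum_expand_mul_X hp P Q]
  refine this _ ?_
  rw [map_add, map_nsmul, smul_eq_mul, Finsupp.degree_single]
  exact Nat.succ_lt_succ (Nat.lt_succ_of_le (Nat.mul_le_mul_left p (Nat.le_of_lt_succ hd)))

theorem eq_zero_of_map_add_sum_map_mul_X_eq_zero [Field k] [Fintype σ] {p : ℕ} (hp : 2 ≤ p)
    {ρ : MvPowerSeries σ k →ₐ[k] MvPowerSeries σ k}
    (hρ : ∀ i, X i ^ p - ρ (X i) ∈ maximalIdeal (MvPowerSeries σ k) ^ (p + 1))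
    {P : MvPowerSeries σ k} {Q : σ → MvPowerSeries σ k} (h : ρ P + ∑ i, ρ (Q i) * X i = 0) :
    P = 0 ∧ Q = 0 := by
  have hmem (n : ℕ) : P ∈ maximalIdeal (MvPowerSeries σ k) ^ n ∧
      ∀ i, Q i ∈ maximalIdeal (MvPowerSeries σ k) ^ n := by
    induction n with
    | zero => simp
    | succ n ih => exact mem_pow_succ_of_map_add_sum_map_mul_X_eq_zero hp hρ h ih.1 ih.2
  exact ⟨eq_zero_of_forall_mem_maximalIdeal_pow fun n => (hmem n).1,
    funext fun i => eq_zero_of_forall_mem_maximalIdeal_pow fun n => (hmem n).2 i⟩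

end Independence

/-! ### Generation by completeness -/

section Completeness
variable {R S ι : Type*} [CommRing R] [CommRing S]

theorem isPrecomplete_pi [Finite ι] (I : Ideal R) {M : ι → Type*} [∀ i, AddCommGroup (M i)]
    [∀ i, Module R (M i)] [∀ i, IsPrecomplete I (M i)] : IsPrecomplete I (∀ i, M i) := by
  classical
  cases nonempty_fintype ι
  refine AdicCompletion.of_surjective_iff.mp fun y => ?_
  choose x hx using fun i => AdicCompletion.of_surjective I (M i) (AdicCompletion.pi I M y i)
  refine ⟨x, (AdicCompletion.piEquivOfFintype I M).injective ?_⟩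
  rw [AdicCompletion.piEquivOfFintype_apply, AdicCompletion.piEquivOfFintype_apply]
  exact funext hx

theorem exists_sub_sum_map_mul_mem {k : Type*} [CommRing k] [Algebra k R] [Algebra k S]
    [IsLocalRing S] [IsNoetherianRing S] [Fintype ι] {θ : R →ₐ[k] S} {I : Ideal R}
    [IsPrecomplete I R]
    (hI : I.map θ ≠ ⊤) {J : Ideal S} {e : ι → S}
    (he : ∀ s, ∃ c : ι → k, s - ∑ i, algebraMap k S (c i) * e i ∈ I.map θ ⊔ J) (s : S) :
    ∃ c : ι → R, s - ∑ i, θ (c i) * e i ∈ J := by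
  algebraize [θ.toRingHom]
  have := isPrecomplete_pi (ι := ι) I (M := fun _ => R)
  have : IsHausdorff I (S ⧸ J) :=
    IsHausdorff.map_algebraMap_iff.mp (IsHausdorff.of_isLocalRing _ _ hI)
  let f : (ι → R) →ₗ[R] S ⧸ J :=
    (Ideal.Quotient.mkₐ R J).toLinearMap ∘ₗ Fintype.linearCombination R e
  have hf (c : ι → R) : f c = Ideal.Quotient.mk J (∑ i, θ (c i) * e i) := by
    simp [f, Fintype.linearCombination_apply, Algebra.smul_def, RingHom.algebraMap_toAlgebra]
  have hsurj : Function.Surjective f := by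
    refine surjective_of_mkQ_comp_surjective (I := I) fun y => ?_
    obtain ⟨t, rfl⟩ := Submodule.mkQ_surjective _ y
    obtain ⟨t, rfl⟩ := Ideal.Quotient.mk_surjective t
    obtain ⟨c, hc⟩ := he t
    refine ⟨fun i => algebraMap k R (c i), ((Submodule.Quotient.eq _).mpr ?_).symm⟩
    simp only [hf, AlgHom.commutes]
    rw [← map_sub, Ideal.smul_top_eq_map]
    have := Ideal.mem_map_of_mem (Ideal.Quotient.mk J) hc
    rw [Ideal.map_sup, Ideal.map_quotient_self, sup_bot_eq] at this
    exact Ideal.map_map (I := I) θ.toRingHom (Ideal.Quotient.mk J) ▸ this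
  obtain ⟨c, hc⟩ := hsurj (Ideal.Quotient.mk J s)
  exact ⟨c, Ideal.Quotient.eq.mp (hc.symm.trans (hf c))⟩

end Completeness

section Range
variable {A S : Type*} [CommRing A] [CommRing S]

theorem isHausdorff_of_injective {φ : A →+* S} (hφ : Function.Injective φ) (I : Ideal A)
    [IsHausdorff (I.map φ) S] : IsHausdorff I A := by
  refine ⟨fun s hs => hφ ?_⟩
  rw [map_zero]
  refine IsHausdorff.haus ‹IsHausdorff (I.map φ) S› _ fun n => ?_
  have := hs n
  rw [SModEq.zero, smul_eq_mul, Ideal.mul_top] at this ⊢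
  exact Ideal.map_pow φ I n ▸ Ideal.mem_map_of_mem φ this

theorem le_range_of_forall_eq_map_add_sum {k R ι : Type*} [CommRing k] [CommRing R] [Algebra k R]
    [Algebra k S] [IsLocalRing S] [IsNoetherianRing S] [Fintype ι] {θ : R →ₐ[k] S}
    {T : Subalgebra k S} (hθ : ∀ r, θ r ∈ T) {x : ι → R}
    [IsPrecomplete (Ideal.span (Set.range x)) R] (hI : (Ideal.span (Set.range x)).map θ ≠ ⊤)
    (h : ∀ t ∈ T, ∃ r, ∃ c : ι → S, (∀ i, c i ∈ T) ∧ t = θ r + ∑ i, θ (x i) * c i) :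
    T ≤ θ.range := by
  let θ' : R →+* T := θ.codRestrict T hθ
  have : IsHausdorff (((Ideal.span (Set.range x)).map θ').map (T.val : T →+* S)) S := by
    rw [Ideal.map_map]
    exact .of_isLocalRing _ _ hI
  have := isHausdorff_of_injective (φ := (T.val : T →+* S)) Subtype.val_injective
    ((Ideal.span (Set.range x)).map θ')
  have hsurj : Function.Surjective θ' := by
    refine surjective_of_mk_map_comp_surjective (I := Ideal.span (Set.range x)) θ' fun t => ?_
    obtain ⟨⟨t, ht⟩, rfl⟩ := Ideal.Quotient.mk_surjective t
    obtain ⟨r, c, hc, hrc⟩ := h t ht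
    refine ⟨r, (Ideal.Quotient.eq.mpr ?_).symm⟩
    have hsum : (⟨t, ht⟩ : T) - θ' r = ∑ i, θ' (x i) * ⟨c i, hc i⟩ := by
      ext1
      simpa [θ', sub_eq_iff_eq_add'] using hrc
    rw [hsum]
    exact sum_mem fun i _ => Ideal.mul_mem_right _ _
      (Ideal.mem_map_of_mem θ' (Ideal.subset_span ⟨i, rfl⟩))
  intro t ht
  obtain ⟨r, hr⟩ := hsurj ⟨t, ht⟩
  exact ⟨r, congrArg Subtype.val hr⟩

end Range

section MaximalIdealPow
variable {k S : Type*} [Field k] [CommRing S]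

theorem span_pair_pow_three_le (u v : S) :
    Ideal.span {u, v} ^ 3 ≤ Ideal.span {u, v} * Ideal.span {u ^ 2, v ^ 2} := by
  rw [pow_three', Ideal.span_pair_mul_span_pair, Ideal.span_pair_mul_span_pair,
    Ideal.span_mul_span', Ideal.span_le]
  rintro _ ⟨s, hs, t, ht, rfl⟩
  exact Ideal.subset_span (by simp only [Set.mem_insert_iff, Set.mem_singleton_iff] at *; grind)

variable [IsLocalRing S] [IsNoetherianRing S]

theorem maximalIdeal_pow_three_le_span_pair {u v x y : S} (hm : maximalIdeal S = Ideal.span {u, v})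
    (hx : u ^ 2 - x ∈ maximalIdeal S ^ 3) (hy : v ^ 2 - y ∈ maximalIdeal S ^ 3) :
    maximalIdeal S ^ 3 ≤ Ideal.span {x, y} := by
  have hsq : Ideal.span {u ^ 2, v ^ 2} ≤ Ideal.span {x, y} ⊔ maximalIdeal S ^ 3 := by
    rw [Ideal.span_le]
    rintro _ (rfl | rfl)
    · exact Submodule.mem_sup.mpr ⟨x, Ideal.subset_span (by simp), _, hx, by ring⟩
    · exact Submodule.mem_sup.mpr ⟨y, Ideal.subset_span (by simp), _, hy, by ring⟩
  apply le_of_le_sup_maximalIdeal_mul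
  calc maximalIdeal S ^ 3
      ≤ maximalIdeal S * Ideal.span {u ^ 2, v ^ 2} := hm ▸ span_pair_pow_three_le u v
    _ ≤ maximalIdeal S * (Ideal.span {x, y} ⊔ maximalIdeal S ^ 3) := Ideal.mul_mono_right hsq
    _ ≤ Ideal.span {x, y} ⊔ maximalIdeal S * maximalIdeal S ^ 3 := by
      rw [Ideal.mul_sup]
      exact sup_le_sup_right Ideal.mul_le_right _

theorem exists_sub_mem_span_pair [Algebra k S]
    (hS : Function.Surjective (algebraMap k (ResidueField S)))
    {u v x y e : S} (hm : maximalIdeal S = Ideal.span {u, v})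
    (hx : u ^ 2 - x ∈ maximalIdeal S ^ 3) (hy : v ^ 2 - y ∈ maximalIdeal S ^ 3)
    (he : u * v - e ∈ maximalIdeal S ^ 3) (s : S) : ∃ c : Fin 4 → k,
      s - ∑ i, algebraMap k S (c i) * ![1, u, v, e] i ∈ Ideal.span {x, y} := by
  have h3 := maximalIdeal_pow_three_le_span_pair hm hx hy
  have hstep (r : S) : ∃ (c : k) (p q : S), r = algebraMap k S c + p * u + q * v := by
    obtain ⟨c, hc⟩ := exists_sub_algebraMap_mem_maximalIdeal hS r
    obtain ⟨p, q, hpq⟩ := Ideal.mem_span_pair.mp (hm ▸ hc)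
    exact ⟨c, p, q, by linear_combination -hpq⟩
  obtain ⟨c₀, s₁, s₂, rfl⟩ := hstep s
  obtain ⟨c₁, p₁, q₁, rfl⟩ := hstep s₁
  obtain ⟨c₂, p₂, q₂, rfl⟩ := hstep s₂
  obtain ⟨c₃, hc₃⟩ := exists_sub_algebraMap_mem_maximalIdeal hS (q₁ + p₂)
  have hu : u ∈ maximalIdeal S := hm ▸ Ideal.subset_span (by simp)
  have hv : v ∈ maximalIdeal S := hm ▸ Ideal.subset_span (by simp)
  have huv : (q₁ + p₂ - algebraMap k S c₃) * (u * v) ∈ maximalIdeal S ^ 3 := by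
    rw [pow_three]
    exact Ideal.mul_mem_mul hc₃ (Ideal.mul_mem_mul hu hv)
  have hrem : p₁ * (u ^ 2 - x) + q₂ * (v ^ 2 - y) + algebraMap k S c₃ * (u * v - e)
      + (q₁ + p₂ - algebraMap k S c₃) * (u * v) ∈ Ideal.span {x, y} :=
    h3 (add_mem (add_mem (add_mem (Ideal.mul_mem_left _ _ hx) (Ideal.mul_mem_left _ _ hy))
      (Ideal.mul_mem_left _ _ he)) huv)
  refine ⟨![c₀, c₁, c₂, c₃], ?_⟩
  convert! add_mem (Ideal.mem_span_pair.mpr ⟨p₁, q₂, rfl⟩) hrem using 1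
  simp only [Fin.sum_univ_four, Matrix.cons_val]
  ring

theorem maximalIdeal_sq_le_sup_span_singleton {I : Ideal S} {z f : S}
    (hm : maximalIdeal S = I ⊔ Ideal.span {z}) (hf : z ^ 2 - f ∈ maximalIdeal S ^ 3) :
    maximalIdeal S ^ 2 ≤ I ⊔ Ideal.span {f} := by
  have hz : Ideal.span {z ^ 2} ≤ Ideal.span {f} ⊔ maximalIdeal S * maximalIdeal S ^ 2 := by
    rw [← pow_succ', Ideal.span_singleton_le_iff_mem]
    exact Submodule.mem_sup.mpr ⟨f, Ideal.mem_span_singleton_self f, _, hf, by ring⟩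
  apply le_of_le_sup_maximalIdeal_mul
  calc maximalIdeal S ^ 2
      ≤ I ⊔ Ideal.span {z ^ 2} := by
        rw [hm, pow_two, Ideal.mul_sup, Ideal.sup_mul I _ (Ideal.span {z}),
          Ideal.span_singleton_mul_span_singleton, ← pow_two z]
        exact sup_le (Ideal.mul_le_right.trans le_sup_left) (sup_le_sup_right Ideal.mul_le_left _)
    _ ≤ I ⊔ Ideal.span {f} ⊔ maximalIdeal S * maximalIdeal S ^ 2 := by
      rw [sup_assoc]
      exact sup_le_sup_left hz I

theorem exists_sub_mem_sup_span_singleton [Algebra k S]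
    (hS : Function.Surjective (algebraMap k (ResidueField S))) {I : Ideal S} {z f : S}
    (hm : maximalIdeal S = I ⊔ Ideal.span {z}) (hf : z ^ 2 - f ∈ maximalIdeal S ^ 3) (s : S) :
    ∃ c : Fin 2 → k, s - ∑ i, algebraMap k S (c i) * ![1, z] i ∈ I ⊔ Ideal.span {f} := by
  obtain ⟨c₀, hc₀⟩ := exists_sub_algebraMap_mem_maximalIdeal hS s
  obtain ⟨i, hi, _, hq, hiq⟩ := Submodule.mem_sup.mp (hm ▸ hc₀)
  obtain ⟨q, rfl⟩ := Ideal.mem_span_singleton'.mp hq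
  obtain ⟨c₁, hc₁⟩ := exists_sub_algebraMap_mem_maximalIdeal hS q
  have hz : z ∈ maximalIdeal S := hm ▸ Ideal.mem_sup_right (Ideal.mem_span_singleton_self z)
  have hrem : (q - algebraMap k S c₁) * z ∈ maximalIdeal S ^ 2 := by
    rw [pow_two]
    exact Ideal.mul_mem_mul hc₁ hz
  refine ⟨![c₀, c₁], ?_⟩
  convert! add_mem (Ideal.mem_sup_left hi)
    (maximalIdeal_sq_le_sup_span_singleton hm hf hrem) using 1
  simp only [Fin.sum_univ_two, Matrix.cons_val_zero, Matrix.cons_val_one]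
  linear_combination -hiq

end MaximalIdealPow

theorem exists_sub_rename_mem_span_singleton {k : Type*} [Field k] {n : ℕ}
    {f : MvPowerSeries (Fin (n + 1)) k}
    (hf : X (Fin.last n) ^ 2 - f ∈ maximalIdeal (MvPowerSeries (Fin (n + 1)) k) ^ 3)
    (F : MvPowerSeries (Fin (n + 1)) k) :
    ∃ P Q : MvPowerSeries (Fin n) k,
      F - (rename Fin.castSucc P + rename Fin.castSucc Q * X (Fin.last n)) ∈ Ideal.span {f} := by
  let ι : MvPowerSeries (Fin n) k →ₐ[k] MvPowerSeries (Fin (n + 1)) k := rename Fin.castSucc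
  have hm : maximalIdeal (MvPowerSeries (Fin (n + 1)) k) =
      (Ideal.span (Set.range X)).map ι ⊔ Ideal.span {X (Fin.last n)} := by
    rw [maximalIdeal_eq_span_range_X, Ideal.map_span, ← Set.range_comp, ← Ideal.span_union]
    congr 1
    ext s
    simp [Fin.exists_fin_succ', ι, rename_X, eq_comm, or_comm]
  have hmap : (Ideal.span (Set.range X)).map ι ≠ ⊤ :=
    ((hm ▸ le_sup_left).trans_lt (lt_top_iff_ne_top.mpr Ideal.IsPrime.ne_top')).ne
  obtain ⟨c, hc⟩ := exists_sub_sum_map_mul_mem hmap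
    (exists_sub_mem_sup_span_singleton surjective_algebraMap_residueField hm hf) F
  exact ⟨c 0, c 1, by simpa [Fin.sum_univ_two] using hc⟩

/-! ### Regular pairs and involutions in characteristic two -/

section RegularPair
variable {S : Type*} [CommRing S] [IsDomain S] {p q : S}

/-- As `p, q` is a regular sequence in the ideal `(a, b)`, the latter is a regular sequence too. -/
theorem exists_eq_mul_of_mul_eq_mul_of_mem_span_pair {a b c d : S} (hp : p ≠ 0)
    (hpq : ∀ e, p ∣ q * e → p ∣ e) (hpab : p ∈ Ideal.span {a, b}) (hqab : q ∈ Ideal.span {a, b})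
    (hb : b ≠ 0) (h : c * a = d * b) : ∃ t, c = t * b ∧ d = t * a := by
  obtain ⟨α, β, hα⟩ := Ideal.mem_span_pair.mp hpab
  obtain ⟨γ, δ, hγ⟩ := Ideal.mem_span_pair.mp hqab
  have hcp : c * p = (α * d + β * c) * b := by linear_combination -c * hα + α * h
  have hcq : c * q = (γ * d + δ * c) * b := by linear_combination -c * hγ + γ * h
  obtain ⟨t, ht⟩ := hpq (α * d + β * c) ⟨γ * d + δ * c, mul_right_cancel₀ hb (by
    linear_combination p * hcq - q * hcp)⟩
  have hc : c = t * b := mul_left_cancel₀ hp (by linear_combination hcp + b * ht)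
  exact ⟨t, hc, mul_right_cancel₀ hb (by linear_combination -h + a * hc)⟩

end RegularPair

section Involution
variable {A F S : Type*} [CommRing S] [CharP S 2] [FunLike F S S] [RingHomClass F S S] {g : F}
  {ρ : A → S} {u v : S}

theorem exists_eq_add_trace_of_map_eq_self [IsDomain S] (hg : ∀ s, g (g s) = s)
    (hgρ : ∀ c, g (ρ c) = ρ c)
    (hspan : ∀ s, ∃ P Q R T, s = ρ P + ρ Q * u + ρ R * v + ρ T * (u * g v))
    (hreg : ∀ c d, c * (u + g u) = d * (v + g v) → ∃ t, c = t * (v + g v) ∧ d = t * (u + g u))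
    (hb : v + g v ≠ 0) {s : S} (hs : g s = s) :
    ∃ P t, s = ρ P + (t * (g u * v) + g (t * (g u * v))) := by
  have h2 : (2 : S) = 0 := CharTwo.two_eq_zero
  obtain ⟨P, Q, R, T, rfl⟩ := hspan s
  have hrel : (ρ Q + ρ T * v) * (u + g u) = (ρ R + ρ T * u) * (v + g v) := by
    simp only [map_add, map_mul, hgρ, hg] at hs
    linear_combination hs + (ρ Q * u - ρ R * g v) * h2
  obtain ⟨t, hQ, hR⟩ := hreg _ _ hrel
  have hT : ρ T = t + g t := by
    have hgQ := congrArg g hQ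
    simp only [map_add, map_mul, hgρ, hg] at hgQ
    exact mul_right_cancel₀ hb (by linear_combination hQ - hgQ + (g v * ρ T - g t * (v + g v)) * h2)
  refine ⟨P, t, ?_⟩
  rw [map_mul, map_mul, hg]
  linear_combination u * hQ + v * hR + u * g v * hT + (u * v * t + u * g v * t - ρ T * u * v) * h2

theorem mul_add_map_mul_eq (hg : ∀ s, g (g s) = s) (hgρ : ∀ c, g (ρ c) = ρ c) (P Q R T : A) :
    (ρ P + ρ Q * u + ρ R * v + ρ T * (u * g v)) * (g u * v) +
        g ((ρ P + ρ Q * u + ρ R * v + ρ T * (u * g v)) * (g u * v)) =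
      u * g u * (ρ Q * (v + g v)) + v * g v * (ρ R * (u + g u)) +
        (u * g v + g u * v) * (ρ P + ρ R * (v + g v)) := by
  have h2 : (2 : S) = 0 := CharTwo.two_eq_zero
  simp only [map_add, map_mul, hgρ, hg]
  linear_combination (ρ T * u * g u * v * g v - ρ R * v * g v * (u + g u)) * h2

theorem exists_eq_add_of_map_eq_self [IsDomain S] (hg : ∀ s, g (g s) = s)
    (hgρ : ∀ c, g (ρ c) = ρ c)
    (hspan : ∀ s, ∃ P Q R T, s = ρ P + ρ Q * u + ρ R * v + ρ T * (u * g v))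
    (hreg : ∀ c d, c * (u + g u) = d * (v + g v) → ∃ t, c = t * (v + g v) ∧ d = t * (u + g u))
    (hb : v + g v ≠ 0) {s : S} (hs : g s = s) :
    ∃ P, ∃ c : Fin 3 → S, (∀ i, g (c i) = c i) ∧
      s = ρ P + ∑ i, ![u * g u, v * g v, u * g v + g u * v] i * c i := by
  obtain ⟨P, t, rfl⟩ := exists_eq_add_trace_of_map_eq_self hg hgρ hspan hreg hb hs
  obtain ⟨P', Q, R, T, rfl⟩ := hspan t
  refine ⟨P, ![ρ Q * (v + g v), ρ R * (u + g u), ρ P' + ρ R * (v + g v)], fun i => ?_, ?_⟩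
  · fin_cases i <;> simp [hg, hgρ, add_comm]
  · rw [mul_add_map_mul_eq hg hgρ]
    simp [Fin.sum_univ_three]

end Involution

section Kernel
variable {A S : Type*} [CommRing A] [CommRing S]

theorem eq_zero_of_map_add_map_mul_eq_zero [NoZeroDivisors S] {ρ : A →+* S} {u v z a b : S}
    (hind : ∀ P Q R, ρ P + ρ Q * u + ρ R * v = 0 → P = 0 ∧ Q = 0 ∧ R = 0)
    (ha : ∃ p q, a = ρ p + ρ q * z) (hb : ∃ p q, b = ρ p + ρ q * z) (hz : z = u * b + v * a)
    (hb₀ : b ≠ 0) {P Q : A} (h : ρ P + ρ Q * z = 0) : P = 0 ∧ Q = 0 := by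
  obtain ⟨a₀, a₁, ha⟩ := ha
  obtain ⟨b₀, b₁, hb⟩ := hb
  have hQa : ρ (Q * a₀ - a₁ * P) = ρ Q * a := by
    rw [map_sub, map_mul, map_mul, ha]
    linear_combination -ρ a₁ * h
  have hQb : ρ (Q * b₀ - b₁ * P) = ρ Q * b := by
    rw [map_sub, map_mul, map_mul, hb]
    linear_combination -ρ b₁ * h
  obtain ⟨hP, hQ, -⟩ := hind P (Q * b₀ - b₁ * P) (Q * a₀ - a₁ * P) (by
    rw [hQa, hQb]
    linear_combination h - ρ Q * hz)
  rw [hQ, map_zero, eq_comm] at hQb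
  refine ⟨hP, (hind Q 0 0 ?_).1⟩
  simp [(mul_eq_zero.mp hQb).resolve_right hb₀]

theorem ker_eq_span_singleton {R : Type*} [CommRing R] {ι : A →+* R} {θ : R →+* S} {z f : R}
    (hf : θ f = 0) (hdiv : ∀ F, ∃ P Q, F - (ι P + ι Q * z) ∈ Ideal.span {f})
    (hind : ∀ P Q, θ (ι P) + θ (ι Q) * θ z = 0 → P = 0 ∧ Q = 0) :
    RingHom.ker θ = Ideal.span {f} := by
  have hle : Ideal.span {f} ≤ RingHom.ker θ := by rwa [Ideal.span_singleton_le_iff_mem]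
  refine le_antisymm (fun F hF => ?_) hle
  obtain ⟨P, Q, hPQ⟩ := hdiv F
  have := sub_mem hF (hle hPQ)
  obtain ⟨rfl, rfl⟩ := hind P Q (by simpa using this)
  simpa using hPQ

end Kernel

/-! ### The quotient of the plane -/

section Plane
variable {k : Type*} [Field k]

/-- The homomorphism `k[[X, Y, Z]] → k[[u, v]]` given by the substitution
`(X, Y, Z) ↦ (u * g u, v * g v, u * g v + g u * v)`. -/
noncomputable def invariantHom (g : MvPowerSeries (Fin 2) k →ₐ[k] MvPowerSeries (Fin 2) k) :
    MvPowerSeries (Fin 3) k →ₐ[k] MvPowerSeries (Fin 2) k :=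
  substAlgHom (a := ![X 0 * g (X 0), X 1 * g (X 1), X 0 * g (X 1) + g (X 0) * X 1])
    (hasSubst_of_constantCoeff_zero (by simp [Fin.forall_fin_succ]))

/-- The homomorphism `k[[X, Y]] → k[[u, v]]` given by `(X, Y) ↦ (u * g u, v * g v)`. -/
noncomputable def normPairHom (g : MvPowerSeries (Fin 2) k →ₐ[k] MvPowerSeries (Fin 2) k) :
    MvPowerSeries (Fin 2) k →ₐ[k] MvPowerSeries (Fin 2) k :=
  (invariantHom g).comp (rename Fin.castSucc)

variable {g : MvPowerSeries (Fin 2) k →ₐ[k] MvPowerSeries (Fin 2) k}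

theorem invariantHom_X (i : Fin 3) : invariantHom g (X i) =
    ![X 0 * g (X 0), X 1 * g (X 1), X 0 * g (X 1) + g (X 0) * X 1] i :=
  substAlgHom_X _ i

theorem normPairHom_X (i : Fin 2) : normPairHom g (X i) = X i * g (X i) := by
  fin_cases i <;> simp [normPairHom, rename_X, invariantHom_X]

theorem map_invariantHom (hg : ∀ s, g (g s) = s) (F : MvPowerSeries (Fin 3) k) :
    g (invariantHom g F) = invariantHom g F := by
  have : g.comp (invariantHom g) = invariantHom g :=
    algHom_ext_of_maximalIdeal_eq_span surjective_algebraMap_residueField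
      surjective_algebraMap_residueField maximalIdeal_eq_span_range_X <| by
    rintro _ ⟨i, rfl⟩
    fin_cases i <;> simp [invariantHom_X, hg, mul_comm, add_comm]
  exact DFunLike.congr_fun this F

theorem exists_eq_normPairHom_add_mul {s : MvPowerSeries (Fin 2) k} {f : MvPowerSeries (Fin 3) k}
    (hf : X 2 ^ 2 - f ∈ maximalIdeal (MvPowerSeries (Fin 3) k) ^ 3) (hf₀ : invariantHom g f = 0)
    (hs : s ∈ (invariantHom g).range) :
    ∃ P Q, s = normPairHom g P + normPairHom g Q * (X 0 * g (X 1) + g (X 0) * X 1) := by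
  obtain ⟨F, rfl⟩ := hs
  obtain ⟨P, Q, hPQ⟩ := exists_sub_rename_mem_span_singleton (n := 2) hf F
  obtain ⟨c, hc⟩ := Ideal.mem_span_singleton'.mp hPQ
  refine ⟨P, Q, sub_eq_zero.mp ?_⟩
  have hmap := congrArg (invariantHom g) hc
  rw [map_mul, hf₀, mul_zero] at hmap
  simpa [invariantHom_X, normPairHom] using hmap.symm

theorem mem_maximalIdeal_of_invariantHom_eq {A : MvPowerSeries (Fin 3) k} {i : Fin 2}
    (hA : invariantHom g A = X i + g (X i)) : A ∈ maximalIdeal (MvPowerSeries (Fin 3) k) := by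
  refine (mem_maximalIdeal A).mpr fun h => ?_
  have hX := X_mem_maximalIdeal (k := k) i
  exact (mem_maximalIdeal _).mp (add_mem hX (map_maximalIdeal_le surjective_algebraMap_residueField
    g (Ideal.mem_map_of_mem g hX))) (hA ▸ h.map (invariantHom g))

variable [CharP k 2]

theorem invariantHom_sq_add_eq_zero {A B : MvPowerSeries (Fin 3) k}
    (hA : invariantHom g A = X 0 + g (X 0)) (hB : invariantHom g B = X 1 + g (X 1)) :
    invariantHom g (X 2 ^ 2 + A * B * X 2 + A ^ 2 * X 1 + B ^ 2 * X 0) = 0 := by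
  have h2 : (2 : MvPowerSeries (Fin 2) k) = 0 := CharTwo.two_eq_zero
  have hX₀ : invariantHom g (X 0) = X 0 * g (X 0) := invariantHom_X 0
  have hX₁ : invariantHom g (X 1) = X 1 * g (X 1) := invariantHom_X 1
  have hX₂ : invariantHom g (X 2) = X 0 * g (X 1) + g (X 0) * X 1 := invariantHom_X 2
  simp only [map_add, map_mul, map_pow, hA, hB, hX₀, hX₁, hX₂]
  linear_combination ((X 0 * g (X 1) + g (X 0) * X 1) ^ 2 + 2 * X 0 * X 1 * g (X 0) * g (X 1) +
    (X 0 * g (X 1) + g (X 0) * X 1) * (X 0 * X 1 + g (X 0) * g (X 1))) * h2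

variable (hg : ∀ s, g (g s) = s) {n : ℕ}
  (hfree : maximalIdeal (MvPowerSeries (Fin 2) k) ^ n ≤
    Ideal.span {X 0 + g (X 0), X 1 + g (X 1)})

include hg hfree

theorem add_map_mem_maximalIdeal_sq {s : MvPowerSeries (Fin 2) k}
    (hs : s ∈ maximalIdeal (MvPowerSeries (Fin 2) k)) :
    s + g s ∈ maximalIdeal (MvPowerSeries (Fin 2) k) ^ 2 := by
  refine mem_maximalIdeal_sq_of_map_eq_self surjective_algebraMap_residueField (g := g)
    maximalIdeal_eq_span_X_zero_X_one (isRelPrime_X_pow zero_ne_one n) ?_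
    (add_mem hs (map_maximalIdeal_le surjective_algebraMap_residueField g
      (Ideal.mem_map_of_mem g hs))) (by rw [map_add, hg, add_comm])
  simpa only [CharTwo.sub_eq_add] using hfree

theorem mul_sub_mul_map_mem_maximalIdeal_pow_three {s t : MvPowerSeries (Fin 2) k}
    (hs : s ∈ maximalIdeal (MvPowerSeries (Fin 2) k))
    (ht : t ∈ maximalIdeal (MvPowerSeries (Fin 2) k)) :
    s * t - s * g t ∈ maximalIdeal (MvPowerSeries (Fin 2) k) ^ 3 := by
  rw [← mul_sub, CharTwo.sub_eq_add, pow_succ']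
  exact Ideal.mul_mem_mul hs (add_map_mem_maximalIdeal_sq hg hfree ht)

theorem X_one_add_map_ne_zero : X 1 + g (X 1) ≠ 0 := by
  intro hb
  rw [hb, Ideal.span_pair_zero] at hfree
  have hdvd (i : Fin 2) : X 0 + g (X 0) ∣ X i ^ n :=
    Ideal.mem_span_singleton.mp (hfree (Ideal.pow_mem_pow (X_mem_maximalIdeal i) n))
  have ha := add_map_mem_maximalIdeal_sq hg (by rwa [hb, Ideal.span_pair_zero])
    (X_mem_maximalIdeal (0 : Fin 2))
  exact Ideal.pow_le_self two_ne_zero ha (isRelPrime_X_pow zero_ne_one n (hdvd 0) (hdvd 1))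

theorem exists_eq_mul_of_mul_add_map_eq {c d : MvPowerSeries (Fin 2) k}
    (h : c * (X 0 + g (X 0)) = d * (X 1 + g (X 1))) :
    ∃ t, c = t * (X 1 + g (X 1)) ∧ d = t * (X 0 + g (X 0)) := by
  have : IsDomain (MvPowerSeries (Fin 2) k) := NoZeroDivisors.to_isDomain _
  have hX (i : Fin 2) := hfree (Ideal.pow_mem_pow (X_mem_maximalIdeal i) n)
  exact exists_eq_mul_of_mul_eq_mul_of_mem_span_pair (X_pow_ne_zero 0 n)
    (fun _ => X_pow_dvd_of_dvd_X_pow_mul zero_ne_one) (hX 0) (hX 1)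
    (X_one_add_map_ne_zero hg hfree) h

theorem exists_eq_normPairHom_add (s : MvPowerSeries (Fin 2) k) : ∃ P Q R T, s =
    normPairHom g P + normPairHom g Q * X 0 + normPairHom g R * X 1 +
      normPairHom g T * (X 0 * g (X 1)) := by
  have hmap : (Ideal.span (Set.range X)).map (normPairHom g) =
      Ideal.span {X 0 * g (X 0), X 1 * g (X 1)} := by
    rw [Ideal.map_span, ← Set.range_comp]
    congr 1
    ext
    simp [normPairHom_X, Fin.exists_fin_two, eq_comm]
  have hne := map_span_range_X_ne_top surjective_algebraMap_residueField (normPairHom g)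
  have hmul (i j : Fin 2) := mul_sub_mul_map_mem_maximalIdeal_pow_three hg hfree
    (X_mem_maximalIdeal i) (X_mem_maximalIdeal j)
  have hstep (r : MvPowerSeries (Fin 2) k) := exists_sub_mem_span_pair
    surjective_algebraMap_residueField maximalIdeal_eq_span_X_zero_X_one
    (pow_two (X 0 : MvPowerSeries (Fin 2) k) ▸ hmul 0 0)
    (pow_two (X 1 : MvPowerSeries (Fin 2) k) ▸ hmul 1 1) (hmul 0 1) r
  obtain ⟨c, hc⟩ := exists_sub_sum_map_mul_mem hne (J := ⊥) (by simpa [hmap] using hstep) s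
  refine ⟨c 0, c 1, c 2, c 3, ?_⟩
  simpa [Fin.sum_univ_four, sub_eq_zero] using hc

theorem eq_zero_of_normPairHom_add_mul_X_eq_zero {P Q R : MvPowerSeries (Fin 2) k}
    (h : normPairHom g P + normPairHom g Q * X 0 + normPairHom g R * X 1 = 0) :
    P = 0 ∧ Q = 0 ∧ R = 0 := by
  obtain ⟨hP, hQR⟩ := eq_zero_of_map_add_sum_map_mul_X_eq_zero le_rfl (ρ := normPairHom g) (P := P)
    (Q := ![Q, R]) (fun i => by
      rw [normPairHom_X, pow_two]
      exact mul_sub_mul_map_mem_maximalIdeal_pow_three hg hfree (X_mem_maximalIdeal i)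
        (X_mem_maximalIdeal i)) (by simpa [Fin.sum_univ_two, add_assoc] using h)
  exact ⟨hP, congrFun hQR 0, congrFun hQR 1⟩

theorem fixedSubalgebra_eq_range_invariantHom : fixedSubalgebra g = (invariantHom g).range := by
  have : IsDomain (MvPowerSeries (Fin 2) k) := NoZeroDivisors.to_isDomain _
  have hne := map_span_range_X_ne_top surjective_algebraMap_residueField (invariantHom g)
  refine le_antisymm (le_range_of_forall_eq_map_add_sum (map_invariantHom hg) hne fun s hs => ?_) ?_
  · obtain ⟨P, c, hc, hs⟩ := exists_eq_add_of_map_eq_self (ρ := normPairHom g) hg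
      (fun _ => map_invariantHom hg _)
      (exists_eq_normPairHom_add hg hfree) (fun _ _ => exists_eq_mul_of_mul_add_map_eq hg hfree)
      (X_one_add_map_ne_zero hg hfree) hs
    exact ⟨rename Fin.castSucc P, c, hc, by simpa only [← invariantHom_X] using! hs⟩
  · rintro _ ⟨F, rfl⟩
    exact map_invariantHom hg F

theorem ker_invariantHom {A B : MvPowerSeries (Fin 3) k}
    (hA : invariantHom g A = X 0 + g (X 0)) (hB : invariantHom g B = X 1 + g (X 1)) :
    RingHom.ker (invariantHom g) =
      Ideal.span {X 2 ^ 2 + A * B * X 2 + A ^ 2 * X 1 + B ^ 2 * X 0} := by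
  have hrel := invariantHom_sq_add_eq_zero hA hB
  have hX (i : Fin 3) := X_mem_maximalIdeal (k := k) i
  have hsq := sq_sub_mem_pow_three (hX 0) (hX 1) (hX 2)
    (mem_maximalIdeal_of_invariantHom_eq hA) (mem_maximalIdeal_of_invariantHom_eq hB)
  refine ker_eq_span_singleton (ι := (rename Fin.castSucc).toRingHom) (z := X 2) hrel
    (exists_sub_rename_mem_span_singleton hsq) fun P Q h => ?_
  have hz : X 0 * g (X 1) + g (X 0) * X 1 = X 0 * (X 1 + g (X 1)) + X 1 * (X 0 + g (X 0)) := by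
    linear_combination -(X 0 * X 1) * (CharTwo.two_eq_zero : (2 : MvPowerSeries (Fin 2) k) = 0)
  exact eq_zero_of_map_add_map_mul_eq_zero (ρ := (normPairHom g).toRingHom)
    (fun _ _ _ => eq_zero_of_normPairHom_add_mul_X_eq_zero hg hfree)
    (exists_eq_normPairHom_add_mul hsq hrel ⟨A, hA⟩)
    (exists_eq_normPairHom_add_mul hsq hrel ⟨B, hB⟩) hz (X_one_add_map_ne_zero hg hfree)
    (by simpa [invariantHom_X, normPairHom] using h)

end Plane

/-- Let `k` be a field of characteristic 2 and `S = k[[u,v]]` with an action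
of `Z/2Z = {1, g}` (an algebra involution `g`), free outside the closed point (the ideal
`(u + g u, v + g v)` contains a power of the maximal ideal `(u, v)`).  With
`x = u·g(u)`, `y = v·g(v)`, `z = u·g(v) + g(u)·v`, `a = u + g(u)`, `b = v + g(v)`,
the invariant ring `S^G` equals `k[[x,y,z]]/(z² + abz + a²y + b²x)`, where `a, b` are
expressed as power series `A, B` in `x, y, z`: there is a `k`-algebra isomorphism from
the quotient of `k[[X,Y,Z]]` by `(Z² + ABZ + A²Y + B²X)` onto the fixed subalgebra,
sending `X, Y, Z, A, B` to `x, y, z, a, b` respectively. -/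
theorem stmt12 (k : Type*) [Field k] [CharP k 2]
    (g : MvPowerSeries (Fin 2) k →ₐ[k] MvPowerSeries (Fin 2) k)
    (hg2 : ∀ s, g (g s) = s) (hg_ne : g ≠ AlgHom.id k (MvPowerSeries (Fin 2) k))
    (u v : MvPowerSeries (Fin 2) k) (hu : u = X 0) (hv : v = X 1)
    (hfree : ∃ n : ℕ,
      (Ideal.span {(X 0 : MvPowerSeries (Fin 2) k), X 1}) ^ n ≤ Ideal.span {u + g u, v + g v})
    (x y z a b : MvPowerSeries (Fin 2) k)
    (hx : x = u * g u) (hy : y = v * g v) (hz : z = u * g v + g u * v)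
    (ha : a = u + g u) (hb : b = v + g v) :
    ∃ (A B : MvPowerSeries (Fin 3) k)
      (φ : (MvPowerSeries (Fin 3) k ⧸
        Ideal.span {(X 2 : MvPowerSeries (Fin 3) k) ^ 2 + A * B * X 2
          + A ^ 2 * X 1 + B ^ 2 * X 0}) ≃ₐ[k] fixedSubalgebra g),
      ((φ (Ideal.Quotient.mk _ (X 0)) : MvPowerSeries (Fin 2) k) = x) ∧
      ((φ (Ideal.Quotient.mk _ (X 1)) : MvPowerSeries (Fin 2) k) = y) ∧
      ((φ (Ideal.Quotient.mk _ (X 2)) : MvPowerSeries (Fin 2) k) = z) ∧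
      ((φ (Ideal.Quotient.mk _ A) : MvPowerSeries (Fin 2) k) = a) ∧
      ((φ (Ideal.Quotient.mk _ B) : MvPowerSeries (Fin 2) k) = b) := by
  subst hu hv hx hy hz ha hb
  obtain ⟨n, hfree⟩ := hfree
  rw [← maximalIdeal_eq_span_X_zero_X_one] at hfree
  have hrange := fixedSubalgebra_eq_range_invariantHom hg2 hfree
  have hfix (s) : s + g s ∈ (invariantHom g).range := by
    rw [← hrange]
    change g (s + g s) = s + g s
    rw [map_add, hg2, add_comm]
  obtain ⟨A, hA⟩ := hfix (X 0)
  obtain ⟨B, hB⟩ := hfix (X 1)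
  let φ := (Ideal.quotientEquivAlgOfEq k (ker_invariantHom hg2 hfree hA hB).symm).trans
    ((Ideal.quotientKerEquivRange (invariantHom g)).trans (Subalgebra.equivOfEq _ _ hrange.symm))
  have hφ (F) : (φ (Ideal.Quotient.mk _ F) : MvPowerSeries (Fin 2) k) = invariantHom g F := rfl
  exact ⟨A, B, φ, (hφ _).trans (invariantHom_X 0), (hφ _).trans (invariantHom_X 1),
    (hφ _).trans (invariantHom_X 2), (hφ A).trans hA, (hφ B).trans hB⟩
end
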